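/- arXiv:1802.04137 — 2 statements merged into one kernel-verified Lean document; each statement's English description precedes it below -/
import Mathlib

section
/- Let E ⊆ ℝ/ℤ be an Erdős semi-group, i.e., E = ⋃_{i∈ℕ} F_i where each F_i is a closed ×2 mod 1 invariant set, there is W : ℕ² → ℕ with F_i + F_j ⊆ F_{W(i,j)} for all i, j, and each F_i contains x/2 (computed in [0,1)) whenever it contains x. Then the Hausdorff dimension of E is either 0 or 1. -/
open Filter MeasureTheory Set

open scoped Pointwise NNReal ENNReal Topology

/-!
Pass to the circle and let `F` be a closed `×2`-invariant set of positive dimension. It has at least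
`2 ^ (δ * n)` binary words of length `n`, so by a Sauer–Shelah type argument its words order-shatter
a set `J` of positions of density at least `2 * c > 0`. By invariance every block of length `m` of
such a word is again a word of `F`. If words order-shatter two disjoint sets of positions, their
sums order-shatter the union, and some translate of `J` covers a proportion `c` of any given set of
positions below `m`; hence `k`-fold sums of words of length `m` order-shatter all but at most
`(1 - c) ^ k * m` of the positions, and, up to a factor `k + 1` for the carries, the `k`-fold sumset
of `F` has at least `2 ^ ((1 - (1 - c) ^ k) * m)` words. For a closed invariant set
the exponential growth rate of the number of words is at most the Hausdorff dimension (Furstenberg),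
so the dimensions of the iterated sumsets tend to `1`, and these sumsets stay in the semigroup.
-/

/-! ### Order-shattering of sets of integers -/

/-- A set `A` of integers order-shatters a set `J` of binary positions if the binary tree branching
exactly at the levels in `J` embeds into `A`, read from the least significant bit: there are
elements `f S` of `A`, one for each pattern `S` of bits, such that `f S` and `f T` agree modulo
`2 ^ b` exactly when `S` and `T` agree on the positions of `J` below `b`. -/
def OrderShatters (A : Set ℤ) (J : Finset ℕ) : Prop :=
  ∃ f : Set ℕ → ℤ, (∀ S, f S ∈ A) ∧
    ∀ S T b, f S ≡ f T [ZMOD 2 ^ b] ↔ ∀ i ∈ J, i < b → (i ∈ S ↔ i ∈ T)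

open Classical in
/-- The residues modulo `2 ^ n` of the elements of `A`, represented in `[0, 2 ^ n)`. -/
noncomputable def residues (A : Set ℤ) (n : ℕ) : Finset ℤ :=
  {r ∈ Finset.Ico 0 (2 ^ n) | ∃ a ∈ A, a % 2 ^ n = r}

/-- The elements of `A` with least significant binary digit `r`, with that digit removed. -/
def tails (A : Set ℤ) (r : ℤ) : Set ℤ :=
  {a | 2 * a + r ∈ A}

lemma emod_mul_eq_emod_add_mul {m k : ℤ} (hm : 0 ≤ m) (a : ℤ) :
    a % (m * k) = a % m + m * (a / m % k) := by
  rw [Int.emod_def, Int.emod_def, Int.emod_def, Int.ediv_ediv_of_nonneg hm]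
  ring

section Residues

variable {A B : Set ℤ} {n : ℕ}

lemma mem_residues {r : ℤ} : r ∈ residues A n ↔ ∃ a ∈ A, a % 2 ^ n = r := by
  simp only [residues, Finset.mem_filter, Finset.mem_Ico, and_iff_right_iff_imp]
  rintro ⟨a, -, rfl⟩
  exact ⟨Int.emod_nonneg a (by positivity), Int.emod_lt_of_pos a (by positivity)⟩

lemma emod_mem_residues {a : ℤ} (ha : a ∈ A) : a % 2 ^ n ∈ residues A n :=
  mem_residues.2 ⟨a, ha, rfl⟩

lemma residues_mono (h : A ⊆ B) : residues A n ⊆ residues B n := fun _ hr ↦ by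
  obtain ⟨a, ha, rfl⟩ := mem_residues.1 hr
  exact emod_mem_residues (h ha)

lemma card_residues_le_two_pow : (residues A n).card ≤ 2 ^ n := by
  classical
  exact (Finset.card_filter_le (Finset.Ico 0 (2 ^ n)) _).trans (by simp)

lemma card_residues_add_le (A : Set ℤ) (C : Finset ℤ) (n : ℕ) :
    (residues (A + C) n).card ≤ (residues A n).card * C.card := by
  rw [← Finset.card_product]
  refine (Finset.card_le_card ?_).trans
    (Finset.card_image_le (f := fun p : ℤ × ℤ ↦ (p.1 + p.2) % 2 ^ n))
  intro r hr
  obtain ⟨_, ⟨a, ha, c, hc, rfl⟩, rfl⟩ := mem_residues.1 hr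
  exact Finset.mem_image.2
    ⟨(a % 2 ^ n, c), Finset.mem_product.2 ⟨emod_mem_residues ha, hc⟩, Int.emod_add_emod a _ c⟩

lemma card_residues_le_mul_of_ediv_mem {m : ℕ} {C : Finset ℤ} (hC : ∀ a ∈ A, a / 2 ^ m ∈ C) :
    (residues A n).card ≤ C.card * (residues A m).card := by
  rw [← Finset.card_product]
  refine (Finset.card_le_card ?_).trans
    (Finset.card_image_le (f := fun p : ℤ × ℤ ↦ (2 ^ m * p.1 + p.2) % 2 ^ n))
  intro r hr
  obtain ⟨a, ha, rfl⟩ := mem_residues.1 hr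
  refine Finset.mem_image.2
    ⟨(a / 2 ^ m, a % 2 ^ m), Finset.mem_product.2 ⟨hC a ha, emod_mem_residues ha⟩, ?_⟩
  rw [Int.mul_ediv_add_emod]

lemma card_residues_succ_le (A : Set ℤ) (n : ℕ) :
    (residues A (n + 1)).card ≤
      (residues (tails A 0) n).card + (residues (tails A 1) n).card := by
  have hcover : residues A (n + 1) ⊆ (residues (tails A 0) n).image (2 * · + 0) ∪
      (residues (tails A 1) n).image (2 * · + 1) := by
    intro r hr
    obtain ⟨a, ha, rfl⟩ := mem_residues.1 hr
    have hdigit : a % 2 ^ (n + 1) = 2 * (a / 2 % 2 ^ n) + a % 2 := by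
      rw [pow_succ', emod_mul_eq_emod_add_mul zero_le_two, add_comm]
    have htail : a / 2 ∈ tails A (a % 2) := by
      change 2 * (a / 2) + a % 2 ∈ A
      rwa [Int.mul_ediv_add_emod]
    rw [hdigit, Finset.mem_union]
    rcases Int.emod_two_eq_zero_or_one a with h | h <;> rw [h] at htail ⊢
    · exact .inl (Finset.mem_image_of_mem _ (emod_mem_residues htail))
    · exact .inr (Finset.mem_image_of_mem _ (emod_mem_residues htail))
  exact (Finset.card_le_card hcover).trans <| (Finset.card_union_le _ _).trans <|
    add_le_add Finset.card_image_le Finset.card_image_le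

end Residues

lemma two_mul_add_modEq_two_mul_add_iff {a a' r : ℤ} {b : ℕ} :
    2 * a + r ≡ 2 * a' + r [ZMOD 2 ^ (b + 1)] ↔ a ≡ a' [ZMOD 2 ^ b] := by
  rw [pow_succ']
  exact ⟨fun h ↦ (h.add_right_cancel' r).mul_left_cancel' two_ne_zero,
    fun h ↦ h.mul_left'.add_right r⟩

lemma ediv_two_pow_modEq_iff {a a' : ℤ} {s b : ℕ} (h : a ≡ a' [ZMOD 2 ^ s]) :
    a / 2 ^ s ≡ a' / 2 ^ s [ZMOD 2 ^ b] ↔ a ≡ a' [ZMOD 2 ^ (b + s)] := by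
  rw [Int.ModEq] at h
  have hpos : (2 : ℤ) ^ s ≠ 0 := by positivity
  rw [add_comm b s, Int.ModEq, Int.ModEq, pow_add, emod_mul_eq_emod_add_mul (by positivity),
    emod_mul_eq_emod_add_mul (by positivity), h, add_right_inj, mul_right_inj' hpos]

namespace OrderShatters

variable {A B : Set ℤ} {J K : Finset ℕ}

lemma empty (hA : A.Nonempty) : OrderShatters A ∅ :=
  ⟨fun _ ↦ hA.some, fun _ ↦ hA.some_mem, by simp⟩

lemma mono (h : OrderShatters A J) (hAB : A ⊆ B) : OrderShatters B J :=
  let ⟨f, hf, hiff⟩ := h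
  ⟨f, fun S ↦ hAB (hf S), hiff⟩

lemma subset (h : OrderShatters A J) (hK : K ⊆ J) : OrderShatters A K := by
  obtain ⟨f, hf, hiff⟩ := h
  refine ⟨fun S ↦ f (S ∩ K), fun S ↦ hf _, fun S T b ↦ ?_⟩
  simp only [hiff, mem_inter_iff, Finset.mem_coe]
  constructor
  · intro h i hi hib
    simpa [hi] using h i (hK hi) hib
  · intro h i _ hib
    exact and_congr_left fun hiK ↦ h i hiK hib

lemma add (hA : OrderShatters A J) (hB : OrderShatters B K) (hd : Disjoint J K) :
    OrderShatters (A + B) (J ∪ K) := by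
  obtain ⟨f, hf, hfiff⟩ := hA
  obtain ⟨g, hg, hgiff⟩ := hB
  refine ⟨fun S ↦ f S + g S, fun S ↦ Set.add_mem_add (hf S) (hg S),
    fun S T b ↦ ⟨fun h ↦ ?_, fun h ↦ ?_⟩⟩
  · induction b with
    | zero => simp
    | succ b ih =>
      have hbelow := ih (h.of_dvd (pow_dvd_pow 2 b.le_succ))
      have hagree {L : Finset ℕ} (hL : L ⊆ J ∪ K) (hb : b ∉ L) :
          ∀ i ∈ L, i < b + 1 → (i ∈ S ↔ i ∈ T) := fun i hi hib ↦
        hbelow i (hL hi) ((Nat.lt_succ_iff.1 hib).lt_of_ne (ne_of_mem_of_not_mem hi hb))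
      have hbJ (hb : b ∈ J) : b ∈ S ↔ b ∈ T :=
        (hfiff S T (b + 1)).1 (((hgiff S T (b + 1)).2 (hagree Finset.subset_union_right
          (Finset.disjoint_left.1 hd hb))).add_right_cancel h) b hb b.lt_succ_self
      have hbK (hb : b ∈ K) : b ∈ S ↔ b ∈ T :=
        (hgiff S T (b + 1)).1 (((hfiff S T (b + 1)).2 (hagree Finset.subset_union_left
          (Finset.disjoint_right.1 hd hb))).add_left_cancel h) b hb b.lt_succ_self
      intro i hi hib
      rcases (Nat.lt_succ_iff.1 hib).lt_or_eq with hib | rfl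
      · exact hbelow i hi hib
      · exact (Finset.mem_union.1 hi).elim hbJ hbK
  · exact ((hfiff S T b).2 fun i hi ↦ h i (Finset.mem_union_left K hi)).add
      ((hgiff S T b).2 fun i hi ↦ h i (Finset.mem_union_right J hi))

lemma ediv_two_pow {s : ℕ} (h : OrderShatters A (K.map (addRightEmbedding s))) :
    OrderShatters ((· / 2 ^ s) '' A) K := by
  obtain ⟨f, hf, hiff⟩ := h
  refine ⟨fun S ↦ f ((· - s) ⁻¹' S) / 2 ^ s, fun S ↦ mem_image_of_mem _ (hf _), fun S T b ↦ ?_⟩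
  have hlow : f ((· - s) ⁻¹' S) ≡ f ((· - s) ⁻¹' T) [ZMOD 2 ^ s] := by
    rw [hiff, Finset.forall_mem_map]
    intro i _ his
    simp only [addRightEmbedding_apply] at his
    omega
  rw [ediv_two_pow_modEq_iff hlow, hiff, Finset.forall_mem_map]
  simp

lemma map_add_one {r : ℤ} (h : OrderShatters (tails A r) J) :
    OrderShatters A (J.map (addRightEmbedding 1)) := by
  obtain ⟨f, hf, hiff⟩ := h
  refine ⟨fun S ↦ 2 * f ((· + 1) ⁻¹' S) + r, fun S ↦ hf _, fun S T b ↦ ?_⟩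
  rcases b with _ | b
  · simp [Int.modEq_one]
  · rw [two_mul_add_modEq_two_mul_add_iff, hiff, Finset.forall_mem_map]
    simp

lemma insert_zero_map_add_one (h₀ : OrderShatters (tails A 0) J)
    (h₁ : OrderShatters (tails A 1) J) :
    OrderShatters A (insert 0 (J.map (addRightEmbedding 1))) := by
  classical
  obtain ⟨f, hf, hfiff⟩ := h₀
  obtain ⟨g, hg, hgiff⟩ := h₁
  refine ⟨fun S ↦ if 0 ∈ S then 2 * g ((· + 1) ⁻¹' S) + 1 else 2 * f ((· + 1) ⁻¹' S) + 0,
    fun S ↦ ?_, fun S T b ↦ ?_⟩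
  · beta_reduce
    split_ifs
    exacts [hg _, hf _]
  rcases b with _ | b
  · simp [Int.modEq_one]
  have hparity (x y : ℤ) : ¬ 2 * x + 1 ≡ 2 * y + 0 [ZMOD 2 ^ (b + 1)] := fun h ↦ by
    have : 2 * x + 1 ≡ 2 * y + 0 [ZMOD 2] := h.of_dvd (dvd_pow_self 2 b.succ_ne_zero)
    rw [Int.ModEq] at this
    omega
  rw [Finset.forall_mem_insert, Finset.forall_mem_map]
  by_cases hS : 0 ∈ S <;> by_cases hT : 0 ∈ T <;> simp only [hS, hT, if_true, if_false]
  · rw [two_mul_add_modEq_two_mul_add_iff, hgiff]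
    simp
  · simpa using hparity _ _
  · simpa using fun h ↦ hparity _ _ (Int.ModEq.symm h)
  · rw [two_mul_add_modEq_two_mul_add_iff, hfiff]
    simp

lemma two_pow_card_le {n : ℕ} (h : OrderShatters A J) (hJ : J ⊆ Finset.range n) :
    2 ^ J.card ≤ (residues A n).card := by
  obtain ⟨f, hf, hiff⟩ := h
  rw [← Finset.card_powerset]
  refine Finset.card_le_card_of_injOn (fun S ↦ f S % 2 ^ n)
    (fun S _ ↦ emod_mem_residues (hf S)) fun S hS T hT hST ↦ ?_
  have hagree : ∀ i ∈ J, i ∈ S ↔ i ∈ T := fun i hi ↦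
    (hiff S T n).1 hST i hi (Finset.mem_range.1 (hJ hi))
  rw [Finset.mem_coe, Finset.mem_powerset] at hS hT
  ext i
  exact ⟨fun h ↦ (hagree i (hS h)).1 h, fun h ↦ (hagree i (hT h)).2 h⟩

end OrderShatters

open Classical in
/-- The sets of positions below `n` that `A` order-shatters. -/
noncomputable def shatteredSets (A : Set ℤ) (n : ℕ) : Finset (Finset ℕ) :=
  {J ∈ (Finset.range n).powerset | OrderShatters A J}

lemma mem_shatteredSets {A : Set ℤ} {n : ℕ} {J : Finset ℕ} :
    J ∈ shatteredSets A n ↔ J ⊆ Finset.range n ∧ OrderShatters A J := by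
  simp [shatteredSets]

lemma map_add_one_subset_range {J : Finset ℕ} {n : ℕ} (hJ : J ⊆ Finset.range n) :
    J.map (addRightEmbedding 1) ⊆ Finset.range (n + 1) := by
  simpa [Finset.subset_iff] using hJ

lemma zero_notMem_map_add_one (J : Finset ℕ) : 0 ∉ J.map (addRightEmbedding 1) := by
  simp

lemma card_shatteredSets_succ_ge (A : Set ℤ) (n : ℕ) :
    (shatteredSets (tails A 0) n).card + (shatteredSets (tails A 1) n).card ≤
      (shatteredSets A (n + 1)).card := by
  set S₀ := shatteredSets (tails A 0) n
  set S₁ := shatteredSets (tails A 1) n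
  let shift : Finset ℕ → Finset ℕ := Finset.map (addRightEmbedding 1)
  have hshift : Function.Injective shift := Finset.map_injective _
  have hinsert : Function.Injective (insert 0 ∘ shift) := fun J K h ↦ hshift <| by
    simpa [shift, Finset.erase_insert] using congrArg (Finset.erase · 0) h
  have hdisj : Disjoint ((S₀ ∪ S₁).image shift) ((S₀ ∩ S₁).image (insert 0 ∘ shift)) := by
    simp only [Finset.disjoint_left, Finset.mem_image, not_exists, not_and]
    rintro _ ⟨J, -, rfl⟩ K - h
    exact zero_notMem_map_add_one J ((congrArg (0 ∈ ·) h).mp (Finset.mem_insert_self 0 _))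
  have hunion : (S₀ ∪ S₁).image shift ⊆ shatteredSets A (n + 1) := by
    refine Finset.image_subset_iff.2 fun J hJ ↦ mem_shatteredSets.2 ?_
    rcases Finset.mem_union.1 hJ with hJ | hJ <;> obtain ⟨hJn, hJ⟩ := mem_shatteredSets.1 hJ <;>
      exact ⟨map_add_one_subset_range hJn, hJ.map_add_one⟩
  have hinter : (S₀ ∩ S₁).image (insert 0 ∘ shift) ⊆ shatteredSets A (n + 1) := by
    refine Finset.image_subset_iff.2 fun J hJ ↦ mem_shatteredSets.2 ?_
    obtain ⟨h₀, h₁⟩ := Finset.mem_inter.1 hJ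
    obtain ⟨hJn, h₀⟩ := mem_shatteredSets.1 h₀
    exact ⟨Finset.insert_subset (by simp) (map_add_one_subset_range hJn),
      h₀.insert_zero_map_add_one (mem_shatteredSets.1 h₁).2⟩
  calc S₀.card + S₁.card
      = ((S₀ ∪ S₁).image shift ∪ (S₀ ∩ S₁).image (insert 0 ∘ shift)).card := by
        rw [Finset.card_union_of_disjoint hdisj, Finset.card_image_of_injective _ hshift,
          Finset.card_image_of_injective _ hinsert, Finset.card_union_add_card_inter]
    _ ≤ (shatteredSets A (n + 1)).card := Finset.card_le_card (Finset.union_subset hunion hinter)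

lemma card_residues_le_card_shatteredSets (A : Set ℤ) (n : ℕ) :
    (residues A n).card ≤ (shatteredSets A n).card := by
  induction n generalizing A with
  | zero =>
    rcases A.eq_empty_or_nonempty with rfl | hA
    · simp [residues]
    · have hempty : ∅ ∈ shatteredSets A 0 :=
        mem_shatteredSets.2 ⟨Finset.empty_subset _, .empty hA⟩
      exact card_residues_le_two_pow.trans (Finset.card_pos.2 ⟨∅, hempty⟩)
  | succ n ih =>
    exact (card_residues_succ_le A n).trans <|
      (add_le_add (ih _) (ih _)).trans (card_shatteredSets_succ_ge A n)

/- Chernoff's trick: each shattered set of size at most `t` contributes at least `z ^ t` to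
`∑ z ^ #J ≤ (1 + z) ^ n`, the sum running over all subsets of `range n`. -/
lemma exists_lt_card_orderShatters {A : Set ℤ} {n t : ℕ} {z : ℝ} (hz₀ : 0 ≤ z) (hz₁ : z ≤ 1)
    (hA : (1 + z) ^ n < (residues A n).card * z ^ t) :
    ∃ J ⊆ Finset.range n, OrderShatters A J ∧ t < J.card := by
  by_contra! hcon
  have hsub : shatteredSets A n ⊆ (Finset.range n).powerset :=
    fun J hJ ↦ Finset.mem_powerset.2 (mem_shatteredSets.1 hJ).1
  refine hA.not_ge ?_
  calc ((residues A n).card : ℝ) * z ^ t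
      ≤ (shatteredSets A n).card * z ^ t := by
        gcongr
        exact card_residues_le_card_shatteredSets A n
    _ ≤ ∑ J ∈ shatteredSets A n, z ^ J.card := by
        rw [← nsmul_eq_mul]
        refine Finset.card_nsmul_le_sum _ _ _ fun J hJ ↦ ?_
        obtain ⟨hJn, hJ⟩ := mem_shatteredSets.1 hJ
        exact pow_le_pow_of_le_one hz₀ hz₁ (hcon J hJn hJ)
    _ ≤ ∑ J ∈ (Finset.range n).powerset, z ^ J.card :=
        Finset.sum_le_sum_of_subset_of_nonneg hsub fun _ _ _ ↦ by positivity
    _ = (1 + z) ^ n := by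
        simpa [add_comm z] using Finset.sum_pow_mul_eq_add_pow z 1 (Finset.range n)

lemma exists_orderShatters_of_rpow_lt {δ : ℝ} (hδ : 0 < δ) :
    ∃ q : ℕ, 0 < q ∧ ∀ (n : ℕ) (A : Set ℤ), (2 : ℝ) ^ (δ * n) < (residues A n).card →
      ∃ J ⊆ Finset.range n, OrderShatters A J ∧ n < q * J.card := by
  set z : ℝ := min 1 (2 ^ (δ / 2) - 1) with hz
  have hz₀ : 0 < z :=
    lt_min one_pos (sub_pos.2 (Real.one_lt_rpow one_lt_two (half_pos hδ)))
  have hz₁ : 1 + z ≤ (2 : ℝ) ^ (δ / 2) := by linarith [min_le_right 1 ((2 : ℝ) ^ (δ / 2) - 1)]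
  have hsmall : (2 : ℝ) ^ (-(δ / 2)) < 1 :=
    Real.rpow_lt_one_of_one_lt_of_neg one_lt_two (by linarith)
  obtain ⟨q, hq⟩ : ∃ q : ℕ, ((2 : ℝ) ^ (-(δ / 2))) ^ (q + 1) < z := by
    obtain ⟨q, hq⟩ := exists_pow_lt_of_lt_one hz₀ hsmall
    exact ⟨q, (pow_le_pow_of_le_one (by positivity) hsmall.le q.le_succ).trans_lt hq⟩
  refine ⟨q + 1, q.succ_pos, fun n A hA ↦ ?_⟩
  have hpow : (2 : ℝ) ^ (-(δ / 2) * n) ≤ z ^ (n / (q + 1)) :=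
    calc (2 : ℝ) ^ (-(δ / 2) * n)
      _ = ((2 : ℝ) ^ (-(δ / 2))) ^ n := Real.rpow_mul_natCast (by simp) _ _
      _ ≤ ((2 : ℝ) ^ (-(δ / 2))) ^ ((q + 1) * (n / (q + 1))) :=
          pow_le_pow_of_le_one (by positivity) hsmall.le (Nat.mul_div_le n (q + 1))
      _ ≤ z ^ (n / (q + 1)) := by
          rw [pow_mul]
          gcongr
  obtain ⟨J, hJ, hAJ, hcard⟩ := exists_lt_card_orderShatters (A := A) (n := n)
      (t := n / (q + 1)) hz₀.le (min_le_left _ _) <|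
    calc (1 + z) ^ n ≤ ((2 : ℝ) ^ (δ / 2)) ^ n := by gcongr
      _ = (2 : ℝ) ^ (δ * n) * (2 : ℝ) ^ (-(δ / 2) * n) := by
          rw [← Real.rpow_mul_natCast (by simp), ← Real.rpow_add two_pos]
          ring_nf
      _ < (residues A n).card * (2 : ℝ) ^ (-(δ / 2) * n) := by gcongr
      _ ≤ (residues A n).card * z ^ (n / (q + 1)) := by gcongr
  exact ⟨J, hJ, hAJ, by rwa [mul_comm, ← Nat.div_lt_iff_lt_mul q.succ_pos]⟩

/-! ### Covering almost all positions by translates -/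

lemma card_le_card_filter_add_mem_add {J : Finset ℕ} {n m b : ℕ} (hJ : J ⊆ Finset.range n)
    (hb : b < m) (hmn : m ≤ n) :
    J.card ≤ {s ∈ Finset.range (n - m + 1) | b + s ∈ J}.card + m := by
  have hcover : J ⊆ {s ∈ Finset.range (n - m + 1) | b + s ∈ J}.image (b + ·) ∪
      (Finset.range b ∪ Finset.Ico (b + (n - m) + 1) n) := by
    intro j hj
    have hjn := Finset.mem_range.1 (hJ hj)
    simp only [Finset.mem_union, Finset.mem_image, Finset.mem_filter, Finset.mem_range,
      Finset.mem_Ico]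
    by_cases h : b ≤ j ∧ j ≤ b + (n - m)
    · have hbj : b + (j - b) = j := by lia
      exact .inl ⟨j - b, ⟨by lia, hbj.symm ▸ hj⟩, hbj⟩
    · lia
  refine (Finset.card_le_card hcover).trans <| (Finset.card_union_le _ _).trans <|
    add_le_add Finset.card_image_le <| (Finset.card_union_le _ _).trans ?_
  rw [Finset.card_range, Nat.card_Ico]
  lia

lemma exists_translate_card_mul_le {J U : Finset ℕ} {n m : ℕ} (hJ : J ⊆ Finset.range n)
    (hU : U ⊆ Finset.range m) (hm : 0 < m) (hmn : m ≤ n) :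
    ∃ s ≤ n - m, (J.card - m) * U.card ≤ n * {b ∈ U | b + s ∈ J}.card := by
  have hcount : U.card * (J.card - m) ≤
      ∑ s ∈ Finset.range (n - m + 1), {b ∈ U | b + s ∈ J}.card := by
    refine (Finset.card_nsmul_le_sum U _ _ fun b hb ↦ ?_).trans_eq
      (Finset.sum_card_bipartiteAbove_eq_sum_card_bipartiteBelow fun b s ↦ b + s ∈ J)
    exact Nat.sub_le_of_le_add <|
      card_le_card_filter_add_mem_add hJ (Finset.mem_range.1 (hU hb)) hmn
  by_contra! hcon
  have hlt : ∑ s ∈ Finset.range (n - m + 1), n * {b ∈ U | b + s ∈ J}.card <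
      ∑ _s ∈ Finset.range (n - m + 1), (J.card - m) * U.card :=
    Finset.sum_lt_sum_of_nonempty (by simp)
      fun s hs ↦ hcon s (Nat.lt_succ_iff.1 (Finset.mem_range.1 hs))
  rw [← Finset.mul_sum, Finset.sum_const, Finset.card_range, smul_eq_mul, mul_comm _ U.card] at hlt
  exact hlt.not_ge (Nat.mul_le_mul (by lia) hcount)

section Greedy

variable {A B D : Set ℤ} {J K : Finset ℕ} {n m : ℕ} {c : ℝ}

lemma OrderShatters.exists_add (hA : OrderShatters A J) (hJ : J ⊆ Finset.range n)
    (hAB : ∀ s ≤ n - m, (· / 2 ^ s) '' A ⊆ B) (hm : 0 < m) (hmn : m ≤ n)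
    (hcJ : c * n + m ≤ J.card) (hD : OrderShatters D K) (hK : K ⊆ Finset.range m) :
    ∃ L ⊆ Finset.range m, OrderShatters (D + B) L ∧ m - (L.card : ℝ) ≤ (1 - c) * (m - K.card) := by
  obtain ⟨s, hs, hcard⟩ := exists_translate_card_mul_le hJ Finset.sdiff_subset hm hmn
    (U := Finset.range m \ K)
  set N : Finset ℕ := {b ∈ Finset.range m \ K | b + s ∈ J}
  have hNK : Disjoint K N := Finset.disjoint_sdiff.mono_right (Finset.filter_subset _ _)
  have hBN : OrderShatters B N := by
    refine OrderShatters.mono (.ediv_two_pow (hA.subset fun i hi ↦ ?_)) (hAB s hs)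
    obtain ⟨b, hb, rfl⟩ := Finset.mem_map.1 hi
    exact (Finset.mem_filter.1 hb).2
  have hgain : c * (m - K.card) ≤ N.card := by
    have hKm : K.card ≤ m := by simpa using Finset.card_le_card hK
    rw [Finset.card_sdiff_of_subset hK, Finset.card_range] at hcard
    have hsub : ((J.card - m : ℕ) : ℝ) * (m - K.card) ≤ n * N.card := by
      exact_mod_cast hcard
    have hJm : (J.card : ℝ) - m ≤ (J.card - m : ℕ) := by
      rw [sub_le_iff_le_add]
      exact_mod_cast le_tsub_add
    have hn : (0 : ℝ) < n := by exact_mod_cast hm.trans_le hmn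
    have hKm' : (0 : ℝ) ≤ m - K.card := sub_nonneg.2 (by exact_mod_cast hKm)
    refine le_of_mul_le_mul_left ?_ hn
    calc n * (c * (m - K.card)) = (c * n) * (m - K.card) := by ring
      _ ≤ ((J.card - m : ℕ) : ℝ) * (m - K.card) := by
        gcongr
        linarith
      _ ≤ n * N.card := hsub
  refine ⟨K ∪ N, Finset.union_subset hK fun b hb ↦ ?_, hD.add hBN hNK, ?_⟩
  · exact (Finset.mem_sdiff.1 (Finset.mem_filter.1 hb).1).1
  · rw [Finset.card_union_of_disjoint hNK]
    push_cast
    linarith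

lemma OrderShatters.exists_nsmul (hA : OrderShatters A J) (hJ : J ⊆ Finset.range n)
    (hAB : ∀ s ≤ n - m, (· / 2 ^ s) '' A ⊆ B) (hm : 0 < m) (hc₀ : 0 ≤ c) (hc₁ : c ≤ 1)
    (hcJ : c * n + m ≤ J.card) (k : ℕ) :
    ∃ K ⊆ Finset.range m, OrderShatters (k • B) K ∧ m - (K.card : ℝ) ≤ (1 - c) ^ k * m := by
  have hmn : m ≤ n := by
    have hJn : (J.card : ℝ) ≤ n := by
      exact_mod_cast (Finset.card_le_card hJ).trans_eq (Finset.card_range n)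
    have hcn : 0 ≤ c * n := by positivity
    exact_mod_cast (by linarith : (m : ℝ) ≤ n)
  induction k with
  | zero => exact ⟨∅, Finset.empty_subset _, by simpa using .empty (singleton_nonempty 0), by simp⟩
  | succ k ih =>
    obtain ⟨K, hK, hBK, hcard⟩ := ih
    obtain ⟨L, hL, hBL, hcard'⟩ := hA.exists_add hJ hAB hm hmn hcJ hBK hK
    refine ⟨L, hL, by rwa [succ_nsmul], hcard'.trans ?_⟩
    calc (1 - c) * (m - K.card) ≤ (1 - c) * ((1 - c) ^ k * m) := by
          have : 0 ≤ 1 - c := sub_nonneg.2 hc₁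
          gcongr
      _ = (1 - c) ^ (k + 1) * m := by ring

end Greedy

/-! ### Binary coding of subsets of the circle -/

/-- The binary words of length `n` of the points of `F`, encoded as the integers `⌊2 ^ n * x⌋`,
where `x` runs through all real lifts of points of `F`; only their residues modulo `2 ^ n`
matter. -/
def dyadicWords (F : Set UnitAddCircle) (n : ℕ) : Set ℤ :=
  (fun x : ℝ ↦ ⌊2 ^ n * x⌋) '' {x | (x : UnitAddCircle) ∈ F}

/-- The number of dyadic intervals of length `2⁻ⁿ` that meet `F`. -/
noncomputable def dyadicCount (F : Set UnitAddCircle) (n : ℕ) : ℕ :=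
  (residues (dyadicWords F n) n).card

lemma two_pow_mul_mem {F : Set UnitAddCircle} (hF : ∀ x ∈ F, 2 • x ∈ F) {x : ℝ}
    (hx : (x : UnitAddCircle) ∈ F) (r : ℕ) : ((2 ^ r * x : ℝ) : UnitAddCircle) ∈ F := by
  induction r with
  | zero => simpa
  | succ r ih =>
    have hdouble : (2 : ℝ) ^ (r + 1) * x = 2 • (2 ^ r * x) := by
      rw [pow_succ', mul_assoc, two_mul, two_nsmul]
    rw [hdouble, AddCircle.coe_nsmul]
    exact hF _ ih

lemma floor_two_pow_mul_ediv (x : ℝ) (a s : ℕ) : ⌊2 ^ (a + s) * x⌋ / 2 ^ s = ⌊2 ^ a * x⌋ := by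
  have h := Int.floor_div_natCast (2 ^ (a + s) * x) (2 ^ s)
  push_cast at h
  rw [← h, pow_add]
  congr 1
  field_simp

lemma ediv_two_pow_image_dyadicWords_subset {F : Set UnitAddCircle} (hF : ∀ x ∈ F, 2 • x ∈ F)
    {n m s : ℕ} (hmn : m ≤ n) (hs : s ≤ n - m) :
    (· / 2 ^ s) '' dyadicWords F n ⊆ dyadicWords F m := by
  rintro _ ⟨_, ⟨x, hx, rfl⟩, rfl⟩
  refine ⟨2 ^ (n - m - s) * x, two_pow_mul_mem hF hx _, ?_⟩
  obtain ⟨r, rfl⟩ : ∃ r, n = m + r + s := ⟨n - m - s, by lia⟩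
  simp only [floor_two_pow_mul_ediv]
  rw [← mul_assoc, ← pow_add]
  congr 4
  lia

lemma nsmul_dyadicWords_subset (F : Set UnitAddCircle) (m k : ℕ) :
    k • dyadicWords F m ⊆ dyadicWords (k • F) m + Icc (-k : ℤ) 0 := by
  induction k with
  | zero =>
    rw [zero_nsmul, zero_nsmul, zero_subset]
    exact ⟨0, ⟨0, by simp, by simp⟩, 0, by simp⟩
  | succ k ih =>
    rw [succ_nsmul, succ_nsmul]
    refine (add_subset_add_right ih).trans ?_
    rintro _ ⟨_, ⟨_, ⟨x, hx, rfl⟩, i, hi, rfl⟩, _, ⟨y, hy, rfl⟩, rfl⟩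
    refine ⟨⌊2 ^ m * (x + y)⌋, ⟨x + y, ?_, rfl⟩,
      ⌊2 ^ m * x⌋ + ⌊2 ^ m * y⌋ + i - ⌊2 ^ m * (x + y)⌋, ?_, by dsimp only; ring⟩
    · exact ⟨x, hx, y, hy, rfl⟩
    · have hle := Int.le_floor_add (2 ^ m * x) (2 ^ m * y)
      have hge := Int.le_floor_add_floor (2 ^ m * x) (2 ^ m * y)
      rw [← mul_add] at hle hge
      rw [mem_Icc] at hi ⊢
      push_cast
      constructor <;> linarith [hi.1, hi.2]

lemma card_residues_nsmul_dyadicWords_le (F : Set UnitAddCircle) (m k : ℕ) :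
    (residues (k • dyadicWords F m) m).card ≤ dyadicCount (k • F) m * (k + 1) := by
  calc (residues (k • dyadicWords F m) m).card
      ≤ (residues (dyadicWords (k • F) m + (Finset.Icc (-k : ℤ) 0 : Finset ℤ)) m).card := by
        refine Finset.card_le_card (residues_mono ?_)
        simpa using nsmul_dyadicWords_subset F m k
    _ ≤ dyadicCount (k • F) m * (Finset.Icc (-k : ℤ) 0).card := card_residues_add_le _ _ _
    _ = dyadicCount (k • F) m * (k + 1) := by simp [add_comm]

lemma exists_eventually_rpow_le_dyadicCount_nsmul {F : Set UnitAddCircle}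
    (hF : ∀ x ∈ F, 2 • x ∈ F) {δ : ℝ} (hδ : 0 < δ)
    (hcount : ∀ᶠ n : ℕ in atTop, (2 : ℝ) ^ (δ * n) < dyadicCount F n) :
    ∃ c : ℝ, 0 < c ∧ c ≤ 1 ∧ ∀ k : ℕ, ∀ᶠ m : ℕ in atTop,
      (2 : ℝ) ^ ((1 - (1 - c) ^ k) * m) ≤ (k + 1) * dyadicCount (k • F) m := by
  obtain ⟨q, hq, hshatter⟩ := exists_orderShatters_of_rpow_lt hδ
  have hq' : (1 : ℝ) ≤ q := by exact_mod_cast hq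
  have hc₁ : 1 / (2 * q : ℝ) ≤ 1 := (div_le_one (by positivity)).2 (by linarith)
  refine ⟨1 / (2 * q), by positivity, hc₁, fun k ↦ ?_⟩
  have hlarge := (tendsto_id.const_mul_atTop' (show 0 < 2 * q by positivity)).eventually hcount
  filter_upwards [hlarge, eventually_gt_atTop 0] with m hm hm₀
  obtain ⟨J, hJ, hFJ, hcard⟩ := hshatter (2 * q * m) (dyadicWords F (2 * q * m)) hm
  have hmn : m ≤ 2 * q * m := Nat.le_mul_of_pos_left m (by positivity)
  have hJm : (1 / (2 * q) : ℝ) * (2 * q * m : ℕ) + m ≤ J.card := by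
    have h2m : 2 * m < J.card := by
      refine lt_of_mul_lt_mul_left' (a := q) ?_
      convert hcard using 1
      ring
    have h2m' : (2 * m : ℝ) ≤ J.card := by exact_mod_cast h2m.le
    push_cast
    field_simp
    linarith
  obtain ⟨K, hK, hFK, hKcard⟩ := hFJ.exists_nsmul hJ
    (fun s hs ↦ ediv_two_pow_image_dyadicWords_subset hF hmn hs) hm₀ (by positivity) hc₁ hJm k
  have hKwords : 2 ^ K.card ≤ (k + 1) * dyadicCount (k • F) m :=
    (hFK.two_pow_card_le hK).trans <|
      (card_residues_nsmul_dyadicWords_le F m k).trans_eq (mul_comm _ _)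
  calc (2 : ℝ) ^ ((1 - (1 - 1 / (2 * q : ℝ)) ^ k) * m) ≤ 2 ^ (K.card : ℝ) := by
        refine Real.rpow_le_rpow_of_exponent_le one_le_two ?_
        linarith
    _ = ((2 ^ K.card : ℕ) : ℝ) := by simp
    _ ≤ (k + 1) * dyadicCount (k • F) m := by exact_mod_cast hKwords

/-! ### Word counts and Hausdorff dimension -/

lemma lipschitzWith_coe_unitAddCircle : LipschitzWith 1 ((↑) : ℝ → UnitAddCircle) :=
  LipschitzWith.of_dist_le_mul fun x y ↦ by
    rw [NNReal.coe_one, one_mul, dist_eq_norm, dist_eq_norm, ← AddCircle.coe_sub]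
    exact QuotientAddGroup.norm_mk_le_norm

lemma ediam_coe_image_floor_eq_le (n : ℕ) (w : ℤ) :
    Metric.ediam (((↑) : ℝ → UnitAddCircle) '' {x | ⌊2 ^ n * x⌋ = w}) ≤
      ENNReal.ofReal ((1 / 2) ^ n) := by
  have hsub : {x : ℝ | ⌊2 ^ n * x⌋ = w} ⊆ Ico (w / 2 ^ n) ((w + 1) / 2 ^ n) := by
    rintro x rfl
    rw [mem_Ico, div_le_iff₀' (by positivity), lt_div_iff₀' (by positivity)]
    exact ⟨Int.floor_le _, Int.lt_floor_add_one _⟩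
  refine (lipschitzWith_coe_unitAddCircle.ediam_image_le _).trans ?_
  rw [ENNReal.coe_one, one_mul]
  refine (Metric.ediam_mono hsub).trans_eq ?_
  rw [Real.ediam_Ico]
  congr 1
  field_simp
  simp

lemma floor_two_pow_mul_sub_intCast (x : ℝ) (n : ℕ) (k : ℤ) :
    ⌊2 ^ n * (x - k)⌋ = ⌊2 ^ n * x⌋ - 2 ^ n * k := by
  rw [← Int.floor_sub_intCast]
  push_cast
  ring_nf

lemma subset_iUnion_residues_dyadicWords (F : Set UnitAddCircle) (n : ℕ) :
    F ⊆ ⋃ w : residues (dyadicWords F n) n,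
      ((↑) : ℝ → UnitAddCircle) '' {x | ⌊2 ^ n * x⌋ = w} := by
  rintro x hx
  obtain ⟨x, rfl⟩ := QuotientAddGroup.mk_surjective x
  have hword : ⌊2 ^ n * x⌋ ∈ dyadicWords F n := mem_image_of_mem _ hx
  refine mem_iUnion.2 ⟨⟨_, emod_mem_residues hword⟩, x - (⌊2 ^ n * x⌋ / 2 ^ n : ℤ), ?_, by simp⟩
  exact (floor_two_pow_mul_sub_intCast x n _).trans (Int.emod_def _ _).symm

lemma eventually_rpow_lt_dyadicCount {F : Set UnitAddCircle} {d : ℝ≥0} (hd : d < dimH F) :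
    ∀ᶠ n : ℕ in atTop, (2 : ℝ) ^ (d * n : ℝ) < dyadicCount F n := by
  by_contra hcon
  have hfreq : ∃ᶠ n : ℕ in atTop, (dyadicCount F n : ℝ) ≤ 2 ^ (d * n : ℝ) := by
    simpa only [not_eventually, not_lt] using hcon
  have hmesh : Tendsto (fun n : ℕ ↦ ENNReal.ofReal ((1 / 2) ^ n)) atTop (𝓝 0) := by
    simpa using ENNReal.tendsto_ofReal
      (tendsto_pow_atTop_nhds_zero_of_lt_one (r := (1 / 2 : ℝ)) (by norm_num) (by norm_num))
  have hcover := Measure.hausdorffMeasure_le_liminf_sum d F _ hmesh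
    (fun n (w : residues (dyadicWords F n) n) ↦
      ((↑) : ℝ → UnitAddCircle) '' {x | ⌊2 ^ n * x⌋ = w})
    (.of_forall fun n w ↦ ediam_coe_image_floor_eq_le n w)
    (.of_forall fun n ↦ subset_iUnion_residues_dyadicWords F n)
  rw [hausdorffMeasure_of_lt_dimH hd, top_le_iff] at hcover
  refine (hcover ▸ liminf_le_of_frequently_le' ?_ : ∞ ≤ (1 : ℝ≥0∞)).not_gt ENNReal.one_lt_top
  refine hfreq.mono fun n hn ↦ ?_
  calc ∑ w : residues (dyadicWords F n) n,
        Metric.ediam (((↑) : ℝ → UnitAddCircle) '' {x | ⌊2 ^ n * x⌋ = w}) ^ (d : ℝ)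
      ≤ ∑ _w : residues (dyadicWords F n) n, ENNReal.ofReal ((1 / 2) ^ n) ^ (d : ℝ) := by
        gcongr with w
        exact ediam_coe_image_floor_eq_le n w
    _ = ENNReal.ofReal (dyadicCount F n * ((1 / 2) ^ n) ^ (d : ℝ)) := by
        rw [ENNReal.ofReal_mul (by positivity), ENNReal.ofReal_natCast,
          ← ENNReal.ofReal_rpow_of_nonneg (by positivity) d.coe_nonneg]
        simp [dyadicCount]
    _ ≤ ENNReal.ofReal (2 ^ (d * n : ℝ) * ((1 / 2) ^ n) ^ (d : ℝ)) := by gcongr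
    _ = 1 := by
        rw [← Real.rpow_natCast (1 / 2), ← Real.rpow_mul (by norm_num), mul_comm (n : ℝ),
          ← Real.mul_rpow (by norm_num) (by norm_num)]
        norm_num

section Cover

variable {X : Type*} [MetricSpace X] [Nonempty X]

lemma exists_subset_ball_of_ediam_rpow_lt {d : ℝ} (hd : 0 < d) {t : Set X} {a : ℝ≥0∞}
    (ha : a ≠ ∞) (ht : ⨆ _ : t.Nonempty, Metric.ediam t ^ d < a) :
    ∃ x, t ⊆ Metric.ball x (a.toReal ^ d⁻¹) := by
  rcases t.eq_empty_or_nonempty with rfl | hne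
  · exact ⟨Classical.arbitrary X, empty_subset _⟩
  obtain ⟨x, hx⟩ := hne
  rw [ciSup_pos ⟨x, hx⟩] at ht
  refine ⟨x, fun y hy ↦ ?_⟩
  have hdist : edist y x ^ d < a :=
    (ENNReal.rpow_le_rpow (Metric.edist_le_ediam_of_mem hy hx) hd.le).trans_lt ht
  rw [edist_dist, ENNReal.ofReal_rpow_of_nonneg dist_nonneg hd.le,
    ENNReal.ofReal_lt_iff_lt_toReal (by positivity) ha] at hdist
  exact (Real.lt_rpow_inv_iff_of_pos dist_nonneg ENNReal.toReal_nonneg hd).2 hdist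

lemma exists_finset_ball_cover_of_dimH_lt {K : Set X} (hK : IsCompact K) {d : ℝ≥0}
    (hd : dimH K < d) {ε : ℝ} (hε : 0 < ε) :
    ∃ (T : Finset ℕ) (x : ℕ → X) (r : ℕ → ℝ), (∀ i, 0 < r i) ∧
      K ⊆ ⋃ i ∈ T, Metric.ball (x i) (r i) ∧ ∑ i ∈ T, r i ^ (d : ℝ) < ε := by
  borelize X
  have hd₀ : (0 : ℝ) < d := by exact_mod_cast zero_le.trans_lt hd
  have hε₂ : ENNReal.ofReal (ε / 2) ≠ 0 := (ENNReal.ofReal_pos.2 (half_pos hε)).ne'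
  obtain ⟨t, hKt, ht⟩ : ∃ t : ℕ → Set X, K ⊆ ⋃ i, t i ∧
      ∑' i, ⨆ _ : (t i).Nonempty, Metric.ediam (t i) ^ (d : ℝ) < ENNReal.ofReal (ε / 2) := by
    have hzero := hausdorffMeasure_of_dimH_lt hd
    rw [Measure.hausdorffMeasure_apply] at hzero
    have hinf := (ENNReal.iSup_eq_zero.1 (ENNReal.iSup_eq_zero.1 hzero 1) one_pos).trans_lt
      hε₂.bot_lt
    simp only [iInf_lt_iff] at hinf
    obtain ⟨t, hKt, -, ht⟩ := hinf
    exact ⟨t, hKt, ht⟩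
  obtain ⟨η, hη₀, hη⟩ := ENNReal.exists_pos_sum_of_countable hε₂ ℕ
  set a : ℕ → ℝ≥0∞ := fun i ↦ (⨆ _ : (t i).Nonempty, Metric.ediam (t i) ^ (d : ℝ)) + η i
  have htsum : ∑' i, a i < ENNReal.ofReal ε := by
    rw [ENNReal.tsum_add, ← add_halves ε, ENNReal.ofReal_add (by positivity) (by positivity)]
    exact ENNReal.add_lt_add ht hη
  have ha : ∀ i, a i ≠ ∞ := ENNReal.ne_top_of_tsum_ne_top (htsum.trans_le le_top).ne
  have hta : ∀ i, ⨆ _ : (t i).Nonempty, Metric.ediam (t i) ^ (d : ℝ) < a i := fun i ↦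
    ENNReal.lt_add_right (ne_top_of_le_ne_top (ha i) le_self_add) (by simpa using (hη₀ i).ne')
  choose x hx using fun i ↦ exists_subset_ball_of_ediam_rpow_lt hd₀ (ha i) (hta i)
  obtain ⟨T, hT⟩ := hK.elim_finite_subcover _ (fun _ ↦ Metric.isOpen_ball)
    (hKt.trans (iUnion_mono hx))
  refine ⟨T, x, fun i ↦ (a i).toReal ^ (d : ℝ)⁻¹, fun i ↦ ?_, hT, ?_⟩
  · exact Real.rpow_pos_of_pos (ENNReal.toReal_pos (zero_le.trans_lt (hta i)).ne' (ha i)) _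
  · simp only [Real.rpow_inv_rpow ENNReal.toReal_nonneg hd₀.ne']
    rw [← ENNReal.toReal_sum fun i _ ↦ ha i]
    exact ENNReal.toReal_lt_of_lt_ofReal ((ENNReal.sum_le_tsum T).trans_lt htsum)

lemma exists_finset_dyadic_ball_cover_of_dimH_lt {K : Set X} (hK : IsCompact K) {d : ℝ≥0}
    (hd : dimH K < d) {ε : ℝ} (hε : 0 < ε) :
    ∃ (T : Finset ℕ) (x : ℕ → X) (p : ℕ → ℕ),
      K ⊆ ⋃ i ∈ T, Metric.ball (x i) ((1 / 2) ^ p i) ∧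
      ∑ i ∈ T, (2 : ℝ) ^ (-(d * p i) : ℝ) < ε := by
  have hd₀ : (0 : ℝ) < d := by exact_mod_cast zero_le.trans_lt hd
  obtain ⟨T, x, r, hr, hKT, hsum⟩ := exists_finset_ball_cover_of_dimH_lt hK hd
    (ε := min 1 (ε / 2 ^ (d : ℝ))) (by positivity)
  have hr₁ : ∀ i ∈ T, r i ≤ 1 := fun i hi ↦ by
    have hi := (Finset.single_le_sum (f := fun i ↦ r i ^ (d : ℝ))
      (fun j _ ↦ Real.rpow_nonneg (hr j).le _) hi).trans (hsum.le.trans (min_le_left _ _))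
    exact not_lt.1 fun h ↦ (Real.one_lt_rpow h hd₀).not_ge hi
  have hdyadic : ∀ i, ∃ p : ℕ, i ∈ T → (1 / 2) ^ (p + 1) < r i ∧ r i ≤ (1 / 2) ^ p := fun i ↦ by
    by_cases hi : i ∈ T
    · obtain ⟨p, hp⟩ := exists_nat_pow_near_of_lt_one (hr i) (hr₁ i hi)
        (one_half_pos (α := ℝ)) one_half_lt_one
      exact ⟨p, fun _ ↦ hp⟩
    · exact ⟨0, fun h ↦ absurd h hi⟩
  choose p hp using hdyadic
  refine ⟨T, x, p, hKT.trans (iUnion₂_mono fun i hi ↦ Metric.ball_subset_ball (hp i hi).2), ?_⟩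
  calc ∑ i ∈ T, (2 : ℝ) ^ (-(d * p i) : ℝ) ≤ ∑ i ∈ T, 2 ^ (d : ℝ) * r i ^ (d : ℝ) := by
        refine Finset.sum_le_sum fun i hi ↦ ?_
        rw [← Real.mul_rpow two_pos.le (hr i).le]
        calc (2 : ℝ) ^ (-(d * p i) : ℝ) = ((1 / 2) ^ p i) ^ (d : ℝ) := by
              rw [one_div, inv_pow, ← Real.rpow_natCast, ← Real.rpow_neg two_pos.le,
                ← Real.rpow_mul two_pos.le]
              ring_nf
          _ ≤ (2 * r i) ^ (d : ℝ) := by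
              gcongr
              linarith [(hp i hi).1, pow_succ (1 / 2 : ℝ) (p i)]
    _ = 2 ^ (d : ℝ) * ∑ i ∈ T, r i ^ (d : ℝ) := by rw [Finset.mul_sum]
    _ < 2 ^ (d : ℝ) * (ε / 2 ^ (d : ℝ)) := by
        gcongr
        exact hsum.trans_le (min_le_right _ _)
    _ = ε := mul_div_cancel₀ _ (by positivity)

end Cover

section Furstenberg

variable {G : Set UnitAddCircle}

lemma exists_abs_sub_intCast_sub_lt {x y r : ℝ}
    (hy : (y : UnitAddCircle) ∈ Metric.ball (x : UnitAddCircle) r) : ∃ k : ℤ, |y - k - x| < r := by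
  rw [Metric.mem_ball, dist_eq_norm, ← AddCircle.coe_sub, UnitAddCircle.norm_eq] at hy
  exact ⟨round (y - x), by rwa [sub_right_comm]⟩

lemma floor_mem_Icc_of_abs_sub_lt {x y : ℝ} {p : ℕ} (h : |y - x| < (1 / 2) ^ p) :
    ⌊2 ^ p * y⌋ ∈ Finset.Icc (⌊2 ^ p * x⌋ - 1) (⌊2 ^ p * x⌋ + 1) := by
  have hscaled : |2 ^ p * y - 2 ^ p * x| < 1 := by
    rw [← mul_sub, abs_mul, abs_of_pos (by positivity)]
    calc (2 : ℝ) ^ p * |y - x| < 2 ^ p * (1 / 2) ^ p := by gcongr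
      _ = 1 := by rw [← mul_pow]; norm_num
  obtain ⟨hlo, hhi⟩ := abs_lt.1 hscaled
  rw [Finset.mem_Icc, Int.le_floor, ← Int.lt_add_one_iff, Int.floor_lt]
  push_cast
  constructor <;> linarith [Int.floor_le (2 ^ p * x), Int.lt_floor_add_one (2 ^ p * x)]

lemma dyadicCount_inter_ball_le (hG : ∀ x ∈ G, 2 • x ∈ G) (x : UnitAddCircle) (p m : ℕ) :
    dyadicCount (G ∩ Metric.ball x ((1 / 2) ^ p)) (m + p) ≤ 3 * dyadicCount G m := by
  obtain ⟨x, rfl⟩ := QuotientAddGroup.mk_surjective x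
  set A : Set ℤ := (fun y : ℝ ↦ ⌊2 ^ (m + p) * y⌋) ''
    {y | (y : UnitAddCircle) ∈ G ∧ |y - x| < (1 / 2) ^ p}
  have hlift : residues (dyadicWords (G ∩ Metric.ball (x : UnitAddCircle) ((1 / 2) ^ p)) (m + p))
      (m + p) ⊆ residues A (m + p) := by
    intro r hr
    obtain ⟨_, ⟨y, ⟨hyG, hyx⟩, rfl⟩, rfl⟩ := mem_residues.1 hr
    obtain ⟨k, hk⟩ := exists_abs_sub_intCast_sub_lt hyx
    have hyk : ((y - k : ℝ) : UnitAddCircle) = y := by simp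
    refine mem_residues.2 ⟨_, ⟨y - k, ⟨hyk ▸ hyG, hk⟩, rfl⟩, ?_⟩
    simp [floor_two_pow_mul_sub_intCast]
  have hhigh : ∀ a ∈ A, a / 2 ^ m ∈ Finset.Icc (⌊2 ^ p * x⌋ - 1) (⌊2 ^ p * x⌋ + 1) := by
    rintro _ ⟨y, ⟨-, hy⟩, rfl⟩
    rw [add_comm m p, floor_two_pow_mul_ediv]
    exact floor_mem_Icc_of_abs_sub_lt hy
  have hlow : A ⊆ dyadicWords G m := by
    rintro _ ⟨y, ⟨hyG, -⟩, rfl⟩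
    exact ⟨2 ^ p * y, two_pow_mul_mem hG hyG p, by simp only [pow_add, mul_assoc]⟩
  calc dyadicCount (G ∩ Metric.ball (x : UnitAddCircle) ((1 / 2) ^ p)) (m + p)
      ≤ (residues A (m + p)).card := Finset.card_le_card hlift
    _ ≤ _ * (residues A m).card := card_residues_le_mul_of_ediv_mem hhigh
    _ ≤ 3 * dyadicCount G m := by
        refine Nat.mul_le_mul (le_of_eq ?_) (Finset.card_le_card (residues_mono hlow))
        rw [Int.card_Icc]
        lia

lemma dyadicCount_le_sum {ι : Type*} {T : Finset ι} {U : ι → Set UnitAddCircle}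
    (h : G ⊆ ⋃ i ∈ T, U i) (n : ℕ) : dyadicCount G n ≤ ∑ i ∈ T, dyadicCount (G ∩ U i) n := by
  classical
  refine (Finset.card_le_card fun r hr ↦ ?_).trans Finset.card_biUnion_le
  obtain ⟨_, ⟨y, hy, rfl⟩, rfl⟩ := mem_residues.1 hr
  obtain ⟨i, hi, hyi⟩ := mem_iUnion₂.1 (h hy)
  exact Finset.mem_biUnion.2 ⟨i, hi, emod_mem_residues (mem_image_of_mem _ ⟨hy, hyi⟩)⟩

lemma dyadicCount_le_sum_three_mul (hG : ∀ x ∈ G, 2 • x ∈ G) {ι : Type*} {T : Finset ι}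
    {x : ι → UnitAddCircle} {p : ι → ℕ} (hcover : G ⊆ ⋃ i ∈ T, Metric.ball (x i) ((1 / 2) ^ p i))
    {n : ℕ} (hn : ∀ i ∈ T, p i ≤ n) :
    dyadicCount G n ≤ ∑ i ∈ T, 3 * dyadicCount G (n - p i) :=
  (dyadicCount_le_sum hcover n).trans <| Finset.sum_le_sum fun i hi ↦ by
    simpa only [Nat.sub_add_cancel (hn i hi)] using
      dyadicCount_inter_ball_le hG (x i) (p i) (n - p i)

lemma exists_dyadicCount_le_mul_rpow (hG : ∀ x ∈ G, 2 • x ∈ G) (hGc : IsCompact G) {d : ℝ≥0}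
    (hd : dimH G < d) : ∃ c : ℝ, ∀ n : ℕ, (dyadicCount G n : ℝ) ≤ c * 2 ^ (d * n : ℝ) := by
  obtain ⟨T, x, p, hcover, hsum⟩ := exists_finset_dyadic_ball_cover_of_dimH_lt hGc hd
    (ε := 1 / 3) (by norm_num)
  have hp : ∀ i ∈ T, 0 < p i := fun i hi ↦ Nat.pos_of_ne_zero fun h ↦ by
    have hi := (Finset.single_le_sum (f := fun i ↦ (2 : ℝ) ^ (-(d * p i) : ℝ))
      (fun j _ ↦ by positivity) hi).trans_lt hsum
    norm_num [h] at hi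
  refine ⟨2 ^ T.sup p, fun n ↦ ?_⟩
  induction n using Nat.strong_induction_on with
  | _ n ih =>
  rcases lt_or_ge n (T.sup p) with hn | hn
  · calc (dyadicCount G n : ℝ) ≤ 2 ^ n := by exact_mod_cast card_residues_le_two_pow
      _ ≤ 2 ^ T.sup p := pow_le_pow_right₀ one_le_two hn.le
      _ ≤ 2 ^ T.sup p * 2 ^ (d * n : ℝ) :=
        le_mul_of_one_le_right (by positivity) (Real.one_le_rpow one_le_two (by positivity))
  · have hpn : ∀ i ∈ T, p i ≤ n := fun i hi ↦ (Finset.le_sup hi).trans hn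
    calc (dyadicCount G n : ℝ) ≤ ∑ i ∈ T, 3 * (dyadicCount G (n - p i) : ℝ) := by
          exact_mod_cast dyadicCount_le_sum_three_mul hG hcover hpn
      _ ≤ ∑ i ∈ T, 3 * (2 ^ T.sup p * 2 ^ (d * (n - p i : ℕ) : ℝ)) := by
          gcongr with i hi
          exact ih _ (Nat.sub_lt ((hp i hi).trans_le (hpn i hi)) (hp i hi))
      _ = 3 * 2 ^ T.sup p * 2 ^ (d * n : ℝ) * ∑ i ∈ T, (2 : ℝ) ^ (-(d * p i) : ℝ) := by
          rw [Finset.mul_sum]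
          refine Finset.sum_congr rfl fun i hi ↦ ?_
          rw [Nat.cast_sub (hpn i hi), mul_sub, Real.rpow_sub two_pos, Real.rpow_neg two_pos.le]
          ring
      _ ≤ 3 * 2 ^ T.sup p * 2 ^ (d * n : ℝ) * (1 / 3) := by gcongr
      _ = 2 ^ T.sup p * 2 ^ (d * n : ℝ) := by ring

lemma ofReal_le_dimH_of_rpow_le_dyadicCount (hG : ∀ x ∈ G, 2 • x ∈ G) (hGc : IsCompact G)
    {θ C : ℝ} (hC : 0 ≤ C) (h : ∀ᶠ n : ℕ in atTop, (2 : ℝ) ^ (θ * n) ≤ C * dyadicCount G n) :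
    ENNReal.ofReal θ ≤ dimH G := by
  by_contra! hlt
  obtain ⟨d, hGd, hdθ⟩ := ENNReal.lt_iff_exists_nnreal_btwn.1 hlt
  obtain ⟨c, hc⟩ := exists_dyadicCount_le_mul_rpow hG hGc hGd
  have hgap : 0 < θ - d := sub_pos.2 <| by
    rwa [← ENNReal.ofReal_coe_nnreal, ENNReal.ofReal_lt_ofReal_iff_of_nonneg d.coe_nonneg] at hdθ
  have hunbounded : Tendsto (fun n : ℕ ↦ (2 : ℝ) ^ ((θ - d) * n)) atTop atTop :=
    (tendsto_rpow_atTop_of_base_gt_one 2 one_lt_two).comp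
      (tendsto_natCast_atTop_atTop.const_mul_atTop hgap)
  obtain ⟨n, hn, hlarge⟩ := (h.and (hunbounded.eventually_gt_atTop (C * c))).exists
  refine hn.not_gt ?_
  calc C * dyadicCount G n ≤ C * (c * 2 ^ (d * n : ℝ)) := by gcongr; exact hc n
    _ = C * c * 2 ^ (d * n : ℝ) := by ring
    _ < 2 ^ ((θ - d) * n) * 2 ^ (d * n : ℝ) := by gcongr
    _ = 2 ^ (θ * n) := by rw [← Real.rpow_add two_pos]; ring_nf

end Furstenberg

/-! ### Iterated sumsets on the circle -/

lemma nsmul_mem_nsmul_set {M : Type*} [AddCommMonoid M] {F : Set M} {n : ℕ}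
    (hF : ∀ x ∈ F, n • x ∈ F) (k : ℕ) : ∀ x ∈ k • F, n • x ∈ k • F := by
  induction k with
  | zero => simp
  | succ k ih =>
    rw [succ_nsmul]
    rintro _ ⟨x, hx, y, hy, rfl⟩
    exact ⟨n • x, ih x hx, n • y, hF y hy, (nsmul_add x y n).symm⟩

lemma isCompact_nsmul_set {M : Type*} [AddMonoid M] [TopologicalSpace M] [ContinuousAdd M]
    {F : Set M} (hF : IsCompact F) (k : ℕ) : IsCompact (k • F) := by
  induction k with
  | zero => simp
  | succ k ih =>
    rw [succ_nsmul]
    exact ih.add hF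

lemma nsmul_set_subset_addSubsemigroup {M : Type*} [AddMonoid M] {S : AddSubsemigroup M}
    {F : Set M} (hF : F ⊆ S) {k : ℕ} (hk : 1 ≤ k) : k • F ⊆ S := by
  induction k, hk using Nat.le_induction with
  | base => rwa [one_nsmul]
  | succ k _ ih =>
    rw [succ_nsmul]
    rintro _ ⟨x, hx, y, hy, rfl⟩
    exact S.add_mem (ih hx) (hF hy)

lemma dimH_unitAddCircle_le_one (F : Set UnitAddCircle) : dimH F ≤ 1 := by
  rw [← image_preimage_eq F QuotientAddGroup.mk_surjective, ← Real.dimH_univ]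
  exact (lipschitzWith_coe_unitAddCircle.dimH_image_le _).trans (dimH_mono (subset_univ _))

theorem tendsto_dimH_nsmul {F : Set UnitAddCircle} (hFc : IsCompact F) (hF : ∀ x ∈ F, 2 • x ∈ F)
    (hdim : 0 < dimH F) : Tendsto (fun k : ℕ ↦ dimH (k • F)) atTop (𝓝 1) := by
  obtain ⟨d, hd₀, hd⟩ := ENNReal.lt_iff_exists_nnreal_btwn.1 hdim
  obtain ⟨c, hc₀, hc₁, hgrowth⟩ := exists_eventually_rpow_le_dyadicCount_nsmul hF
    (NNReal.coe_pos.2 (ENNReal.coe_pos.1 hd₀)) (eventually_rpow_lt_dyadicCount hd)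
  have hlower (k : ℕ) : ENNReal.ofReal (1 - (1 - c) ^ k) ≤ dimH (k • F) :=
    ofReal_le_dimH_of_rpow_le_dyadicCount (nsmul_mem_nsmul_set hF k) (isCompact_nsmul_set hFc k)
      (by positivity) (hgrowth k)
  have hlim : Tendsto (fun k : ℕ ↦ ENNReal.ofReal (1 - (1 - c) ^ k)) atTop (𝓝 1) := by
    simpa using ENNReal.tendsto_ofReal ((tendsto_pow_atTop_nhds_zero_of_lt_one
      (sub_nonneg.2 hc₁) (sub_lt_self 1 hc₀)).const_sub 1)
  exact tendsto_of_tendsto_of_tendsto_of_le_of_le hlim tendsto_const_nhds hlower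
    fun k ↦ dimH_unitAddCircle_le_one _

theorem dimH_addSubsemigroup_eq_zero_or_one {ι : Type*} [Countable ι]
    (S : AddSubsemigroup UnitAddCircle) {G : ι → Set UnitAddCircle} (hS : (S : Set _) = ⋃ i, G i)
    (hGc : ∀ i, IsCompact (G i)) (hG : ∀ i, ∀ x ∈ G i, 2 • x ∈ G i) :
    dimH (S : Set UnitAddCircle) = 0 ∨ dimH (S : Set UnitAddCircle) = 1 := by
  refine or_iff_not_imp_left.2 fun hne ↦ ?_
  obtain ⟨i, hi⟩ : ∃ i, dimH (G i) ≠ 0 := by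
    rw [hS, dimH_iUnion, ENNReal.iSup_eq_zero] at hne
    exact not_forall.1 hne
  have hGS : G i ⊆ S := hS ▸ subset_iUnion G i
  refine (dimH_unitAddCircle_le_one _).antisymm <|
    le_of_tendsto (tendsto_dimH_nsmul (hGc i) (hG i) (pos_iff_ne_zero.2 hi)) ?_
  filter_upwards [eventually_ge_atTop 1] with k hk
  exact dimH_mono (nsmul_set_subset_addSubsemigroup hGS hk)

/-! ### Transfer to the unit interval -/

lemma dimH_image_of_edist_eq {X Y : Type*} [EMetricSpace X] [EMetricSpace Y] {f : X → Y}
    {t : Set X} (h : ∀ x ∈ t, ∀ y ∈ t, edist (f x) (f y) = edist x y) : dimH (f '' t) = dimH t := by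
  have hf : Isometry (t.domRestrict f) := fun x y ↦ h x x.2 y y.2
  rw [← range_domRestrict, ← image_univ, hf.dimH_image, ← isometry_subtype_coe.dimH_image,
    image_univ, Subtype.range_coe]

lemma dimH_coe_image (A : Set ℝ) : dimH (((↑) : ℝ → UnitAddCircle) '' A) = dimH A := by
  have hA : A = ⋃ z : ℤ, A ∩ {x | ⌊2 * x⌋ = z} := by
    rw [← inter_iUnion, eq_comm, inter_eq_left]
    exact fun x _ ↦ mem_iUnion.2 ⟨_, rfl⟩
  rw [hA, image_iUnion, dimH_iUnion, dimH_iUnion]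
  congr! 2 with z
  refine dimH_image_of_edist_eq ?_
  rintro x ⟨-, rfl⟩ y ⟨-, hy⟩
  have hxy : |x - y| ≤ 1 / 2 := by
    have h := Int.abs_sub_lt_one_of_floor_eq_floor hy.symm
    rw [← mul_sub, abs_mul, abs_two] at h
    linarith
  rw [edist_dist, edist_dist, dist_eq_norm, ← AddCircle.coe_sub,
    (AddCircle.norm_coe_eq_abs_iff 1 one_ne_zero).2 (by simpa using hxy), Real.dist_eq]

lemma isCompact_inter_Ico_union_one {C : Set ℝ} (hC : IsClosed C) :
    IsCompact (C ∩ Ico 0 1 ∪ {1}) := by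
  have h : C ∩ Ico (0 : ℝ) 1 ∪ {1} = Icc 0 1 ∩ (C ∪ {1}) := by
    rw [← Ico_union_right zero_le_one, inter_comm, inter_union_distrib_left]
    grind
  rw [h]
  exact isCompact_Icc.inter_right (hC.union isClosed_singleton)

theorem stmt8_general {ι : Type*} [Countable ι] (E : Set ℝ) (F : ι → Set ℝ)
    (hEF : E = ⋃ i, F i)
    (hclosed : ∀ i, ∃ C : Set ℝ, IsClosed C ∧ F i = C ∩ Set.Ico (0 : ℝ) 1)
    (hinv : ∀ i, ∀ x ∈ F i, Int.fract (2 * x) ∈ F i)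
    (hadd : ∀ x ∈ E, ∀ y ∈ E, Int.fract (x + y) ∈ E) :
    dimH E = 0 ∨ dimH E = 1 := by
  rcases isEmpty_or_nonempty ι with _ | _
  · simp [hEF]
  let S : AddSubsemigroup UnitAddCircle :=
    { carrier := (↑) '' E ∪ {0}
      add_mem' := by
        rintro _ _ (⟨x, hx, rfl⟩ | rfl) (⟨y, hy, rfl⟩ | rfl)
        · exact .inl ⟨_, hadd x hx y hy, AddCircle.coe_fract (x + y)⟩
        · exact .inl ⟨x, hx, (add_zero _).symm⟩
        · exact .inl ⟨y, hy, (zero_add _).symm⟩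
        · exact .inr (add_zero 0) }
  have hdim : dimH E = dimH (S : Set UnitAddCircle) := by
    change dimH E = dimH (((↑) : ℝ → UnitAddCircle) '' E ∪ {0})
    rw [dimH_union, dimH_singleton, dimH_coe_image, max_eq_left zero_le]
  rw [hdim]
  -- On the circle the endpoint `1` missing from `[0, 1)` becomes `0`:
  -- adjoining it restores compactness.
  refine dimH_addSubsemigroup_eq_zero_or_one S
    (G := fun i ↦ ((↑) : ℝ → UnitAddCircle) '' F i ∪ {0}) ?_ (fun i ↦ ?_) fun i ↦ ?_
  · change ((↑) : ℝ → UnitAddCircle) '' E ∪ {0} = _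
    rw [hEF, image_iUnion, iUnion_union]
  · obtain ⟨C, hC, hFC⟩ := hclosed i
    have h := (isCompact_inter_Ico_union_one hC).image lipschitzWith_coe_unitAddCircle.continuous
    rwa [image_union, image_singleton, ← hFC, AddCircle.coe_period] at h
  · rintro _ (⟨x, hx, rfl⟩ | rfl)
    · refine .inl ⟨_, hinv i x hx, ?_⟩
      rw [AddCircle.coe_fract, ← AddCircle.coe_nsmul, two_mul, two_nsmul]
    · exact .inr (nsmul_zero 2)

theorem stmt8 (E : Set ℝ) (F : ℕ → Set ℝ)
    (hEF : E = ⋃ i, F i)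
    (hsub : ∀ i, F i ⊆ Set.Ico (0 : ℝ) 1)
    (hclosed : ∀ i, ∃ C : Set ℝ, IsClosed C ∧ F i = C ∩ Set.Ico (0 : ℝ) 1)
    (hinv : ∀ i, ∀ x ∈ F i, Int.fract (2 * x) ∈ F i)
    (W : ℕ → ℕ → ℕ)
    (hadd : ∀ i j, ∀ x ∈ F i, ∀ y ∈ F j, Int.fract (x + y) ∈ F (W i j))
    (hhalf : ∀ i, ∀ x ∈ F i, x / 2 ∈ F i) :
    dimH E = 0 ∨ dimH E = 1 := by
  refine stmt8_general E F hEF hclosed hinv fun x hx y hy ↦ ?_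
  simp only [hEF, mem_iUnion] at hx hy ⊢
  exact hx.elim fun i hx ↦ hy.elim fun j hy ↦ ⟨W i j, hadd i j x hx y hy⟩
end

section
/- If E ⊆ [0,1) is a Borel set with Hausdorff dimension 1, then there exists e ∈ [0,1] such that the set E + eE = {a + e·b : a, b ∈ E} (sum taken in ℝ) has positive Lebesgue measure. -/
open MeasureTheory

/-
By Frostman's lemma, sets `A` and `B` with `dim A + dim B > 1` carry measures `μ` and `ν` with
`μ (ball x r) ≲ r ^ s` and `ν (ball x r) ≲ r ^ t`, where `s + t > 1`, so that `σ = μ × ν` has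
finite energy `∬ |p - q|⁻¹ dσ dσ`. The `e` in a bounded interval for which `(a, b) ↦ a + e * b`
maps `p` and `q` to points at distance at most `r` form a set of measure `≲ r / |p - q|`.
Integrating over `p`, `q` and `e` and letting `r → 0`, Fatou's lemma shows that for almost every `e`
the image of `σ` has finite lower density at almost each of its points. It is therefore absolutely
continuous, and `A + e B`, which carries it, has positive Lebesgue measure.

Frostman's lemma for analytic sets rests on the dyadic Hausdorff content. This content is continuous
along increasing unions, so that Choquet's theorem provides a compact subset of positive content,
and on a compact set `K` the distribution function `x ↦ content (K ∩ (-∞, x])` yields a measure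
dominated by the content on intervals.
-/

namespace Marstrand

open Set Filter Topology
open scoped ENNReal NNReal

section NetContent

variable {X ι : Type*} {q : ℕ → X → ι} {S T : Set (ℕ × ι)}

/-- The union of the cells in `S`, where the pair `(n, i)` stands for the cell
`{x | q n x = i}` of level `n`. -/
def netUnion (q : ℕ → X → ι) (S : Set (ℕ × ι)) : Set X :=
  {x | ∃ n, (n, q n x) ∈ S}

lemma netUnion_mono (hST : S ⊆ T) : netUnion q S ⊆ netUnion q T :=
  fun _ ⟨n, hn⟩ ↦ ⟨n, hST hn⟩

lemma netUnion_iUnion {κ : Sort*} (S : κ → Set (ℕ × ι)) :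
    netUnion q (⋃ k, S k) = ⋃ k, netUnion q (S k) := by
  ext x
  simp only [netUnion, mem_iUnion, mem_ofPred_eq]
  exact exists_comm

/-- The cells of `S` which are not contained in another cell of `S` of a smaller level. -/
def maximalCells (q : ℕ → X → ι) (S : Set (ℕ × ι)) : Set (ℕ × ι) :=
  {d ∈ S | ∃ x, q d.1 x = d.2 ∧ ∀ k < d.1, (k, q k x) ∉ S}

lemma maximalCells_subset : maximalCells q S ⊆ S := sep_subset _ _

lemma netUnion_maximalCells : netUnion q (maximalCells q S) = netUnion q S := by
  classical
  refine (netUnion_mono maximalCells_subset).antisymm fun x hx ↦ ?_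
  exact ⟨Nat.find hx, Nat.find_spec hx, x, rfl, fun _ ↦ Nat.find_min hx⟩

/-- The partitions into cells are successively finer: a cell of level `n` lies in a single cell of
each level `k ≤ n`. -/
def IsRefining (q : ℕ → X → ι) : Prop :=
  ∀ ⦃k n⦄, k ≤ n → ∀ ⦃x y⦄, q n x = q n y → q k x = q k y

lemma IsRefining.notMem_of_mem_maximalCells (hq : IsRefining q) {k n : ℕ} {x : X}
    (hx : (n, q n x) ∈ maximalCells q S) (hk : k < n) : (k, q k x) ∉ S := by
  obtain ⟨-, y, hy, hmax⟩ := hx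
  rw [← hq hk.le hy]
  exact hmax k hk

lemma mem_maximalCells_of_subset (hST : S ⊆ T) {d : ℕ × ι} (hd : d ∈ maximalCells q T)
    (hdS : d ∈ S) : d ∈ maximalCells q S := by
  obtain ⟨-, x, hx, hmax⟩ := hd
  exact ⟨hdS, x, hx, fun k hk hkS ↦ hmax k hk (hST hkS)⟩

lemma maximalCells_union_subset :
    maximalCells q (S ∪ T) ⊆ maximalCells q S ∪ T := fun _ hd ↦
  hd.1.imp_left (mem_maximalCells_of_subset subset_union_left hd)

lemma maximalCells_iUnion_subset {U : ℕ → Set (ℕ × ι)} (hU : Monotone U) :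
    maximalCells q (⋃ n, U n) ⊆ ⋃ n, ⋂ m ≥ n, maximalCells q (U m) := by
  intro d hd
  obtain ⟨n, hn⟩ := mem_iUnion.1 hd.1
  exact mem_iUnion.2 ⟨n, mem_iInter₂.2 fun m hm ↦
    mem_maximalCells_of_subset (subset_iUnion U m) hd (hU hm hn)⟩

/- Of two cells of different levels through the same point, the finer one is not maximal. -/
lemma IsRefining.netUnion_inter_subset (hq : IsRefining q) :
    netUnion q S ∩ netUnion q T ⊆
      netUnion q (((S ∪ T) \ maximalCells q (S ∪ T)) ∪ (S ∩ T)) := by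
  rintro x ⟨⟨m, hm⟩, ⟨n, hn⟩⟩
  rcases lt_trichotomy m n with hmn | rfl | hmn
  · exact ⟨n, .inl ⟨.inr hn, fun h ↦ hq.notMem_of_mem_maximalCells h hmn (.inl hm)⟩⟩
  · exact ⟨m, .inr ⟨hm, hn⟩⟩
  · exact ⟨m, .inl ⟨.inl hm, fun h ↦ hq.notMem_of_mem_maximalCells h hmn (.inr hn)⟩⟩

variable [MeasurableSpace ι] {w : Measure (ℕ × ι)}

/-- The cheapest cover by cells, the weight of a family `S` of cells being `w S`. -/
noncomputable def netContent (q : ℕ → X → ι) (w : Measure (ℕ × ι)) : OuterMeasure X where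
  measureOf A := ⨅ (S) (_ : A ⊆ netUnion q S), w S
  empty := le_antisymm (iInf₂_le_of_le ∅ (empty_subset _) measure_empty.le) bot_le
  mono hAB := le_iInf₂ fun S hS ↦ iInf₂_le S (hAB.trans hS)
  iUnion_nat A _ := by
    refine ENNReal.le_of_forall_pos_le_add fun ε hε hfin ↦ ?_
    obtain ⟨δ, hδ, hδε⟩ := ENNReal.exists_pos_sum_of_countable' (ENNReal.coe_pos.2 hε).ne' ℕ
    have hcover (n : ℕ) : ∃ S, A n ⊆ netUnion q S ∧
        w S < (⨅ (S) (_ : A n ⊆ netUnion q S), w S) + δ n := by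
      simpa only [iInf_lt_iff, exists_prop] using
        ENNReal.lt_add_right (ENNReal.ne_top_of_tsum_ne_top hfin.ne n) (hδ n).ne'
    choose S hAS hwS using hcover
    calc _ ≤ w (⋃ n, S n) :=
          iInf₂_le _ (netUnion_iUnion S ▸ iUnion_mono hAS)
      _ ≤ ∑' n, w (S n) := measure_iUnion_le S
      _ ≤ ∑' n, ((⨅ (S) (_ : A n ⊆ netUnion q S), w S) + δ n) :=
          ENNReal.tsum_le_tsum fun n ↦ (hwS n).le
      _ ≤ _ := by rw [ENNReal.tsum_add]; gcongr

lemma netContent_le {A : Set X} (hA : A ⊆ netUnion q S) : netContent q w A ≤ w S :=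
  iInf₂_le S hA

lemma exists_cover_of_netContent_lt {A : Set X} {c : ℝ≥0∞} (h : netContent q w A < c) :
    ∃ S, A ⊆ netUnion q S ∧ w S < c := by
  have h' : ⨅ (S) (_ : A ⊆ netUnion q S), w S < c := h
  simpa only [iInf_lt_iff, exists_prop] using h'

lemma measure_maximalCells_iUnion_le {U : ℕ → Set (ℕ × ι)} (hU : Monotone U) {c : ℝ≥0∞}
    (hc : ∀ n, w (maximalCells q (U n)) ≤ c) : w (maximalCells q (⋃ n, U n)) ≤ c := by
  refine (measure_mono (maximalCells_iUnion_subset hU)).trans ?_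
  have hmono : Monotone fun n ↦ ⋂ m ≥ n, maximalCells q (U m) := fun a b hab ↦
    biInter_subset_biInter_left fun m (hm : b ≤ m) ↦ hab.trans hm
  rw [hmono.measure_iUnion]
  exact iSup_le fun n ↦ (measure_mono (biInter_subset_of_mem le_rfl)).trans (hc n)

variable [Countable ι] [MeasurableSingletonClass ι]

/- Both terms on the left are weights of subfamilies of `maximalCells q U ∪ S` and, up to the
cells of `maximalCells q U ∩ S`, these subfamilies are disjoint. -/
lemma IsRefining.measure_maximalCells_union_add_netContent_le (hq : IsRefining q)
    (w : Measure (ℕ × ι)) (U S : Set (ℕ × ι)) :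
    w (maximalCells q (U ∪ S)) + netContent q w (netUnion q U ∩ netUnion q S) ≤
      w (maximalCells q U) + w S := by
  set T := maximalCells q U
  set P := maximalCells q (U ∪ S)
  have hP : P ⊆ T ∪ S := maximalCells_union_subset
  have hcover : netUnion q U ∩ netUnion q S ⊆ netUnion q (((T ∪ S) \ P) ∪ (T ∩ S)) := by
    rw [← netUnion_maximalCells (S := U)]
    refine hq.netUnion_inter_subset.trans (netUnion_mono ?_)
    refine union_subset_union_left _ fun d hd ↦ ⟨hd.1, fun hdP ↦ hd.2 ?_⟩
    exact mem_maximalCells_of_subset (union_subset_union_left S maximalCells_subset) hdP hd.1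
  calc w P + netContent q w (netUnion q U ∩ netUnion q S)
      ≤ w P + (w ((T ∪ S) \ P) + w (T ∩ S)) := by
        gcongr; exact (netContent_le hcover).trans (measure_union_le _ _)
    _ = w (T ∪ S) + w (T ∩ S) := by
        rw [← add_assoc, ← measure_union disjoint_sdiff_right (Set.to_countable _).measurableSet,
          union_sdiff_cancel hP]
    _ = w T + w S := measure_union_add_inter _ (Set.to_countable _).measurableSet

lemma IsRefining.measure_maximalCells_accumulate_le (hq : IsRefining q) {A : ℕ → Set X}
    (hA : Monotone A) (hfin : ∀ n, netContent q w (A n) ≠ ∞) {S : ℕ → Set (ℕ × ι)}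
    (hAS : ∀ n, A n ⊆ netUnion q (S n)) {δ : ℕ → ℝ≥0∞}
    (hS : ∀ n, w (S n) ≤ netContent q w (A n) + δ n) (n : ℕ) :
    w (maximalCells q (accumulate S n)) ≤
      netContent q w (A n) + ∑ i ∈ Finset.range (n + 1), δ i := by
  induction n with
  | zero =>
    rw [accumulate_zero_nat, Finset.sum_range_one]
    exact (measure_mono maximalCells_subset).trans (hS 0)
  | succ n ih =>
    have hinter : A n ⊆ netUnion q (accumulate S n) ∩ netUnion q (S (n + 1)) :=
      subset_inter ((hAS n).trans (netUnion_mono subset_accumulate))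
        ((hA n.le_succ).trans (hAS (n + 1)))
    rw [accumulate_succ, ← ENNReal.add_le_add_iff_right (hfin n)]
    calc w (maximalCells q (accumulate S n ∪ S (n + 1))) + netContent q w (A n)
        ≤ w (maximalCells q (accumulate S n ∪ S (n + 1))) +
            netContent q w (netUnion q (accumulate S n) ∩ netUnion q (S (n + 1))) := by
          gcongr
      _ ≤ w (maximalCells q (accumulate S n)) + w (S (n + 1)) :=
          hq.measure_maximalCells_union_add_netContent_le w _ _
      _ ≤ (netContent q w (A n) + ∑ i ∈ Finset.range (n + 1), δ i) +
            (netContent q w (A (n + 1)) + δ (n + 1)) := add_le_add ih (hS _)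
      _ = netContent q w (A (n + 1)) + ∑ i ∈ Finset.range (n + 2), δ i +
            netContent q w (A n) := by rw [Finset.sum_range_succ _ (n + 1)]; ring

theorem IsRefining.netContent_iUnion (hq : IsRefining q) (w : Measure (ℕ × ι)) {A : ℕ → Set X}
    (hA : Monotone A) : netContent q w (⋃ n, A n) = ⨆ n, netContent q w (A n) := by
  refine le_antisymm ?_ (iSup_le fun n ↦ measure_mono (subset_iUnion A n))
  refine ENNReal.le_of_forall_pos_le_add fun ε hε hsup ↦ ?_
  have hfin (n : ℕ) : netContent q w (A n) ≠ ∞ :=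
    ((le_iSup (fun n ↦ netContent q w (A n)) n).trans_lt hsup).ne
  obtain ⟨δ, hδ, hδε⟩ := ENNReal.exists_pos_sum_of_countable' (ENNReal.coe_pos.2 hε).ne' ℕ
  choose S hAS hS using fun n ↦
    exists_cover_of_netContent_lt (ENNReal.lt_add_right (hfin n) (hδ n).ne')
  calc netContent q w (⋃ n, A n) ≤ w (maximalCells q (⋃ n, accumulate S n)) := by
        refine netContent_le ?_
        rw [netUnion_maximalCells, iUnion_accumulate, netUnion_iUnion]
        exact iUnion_mono hAS
    _ ≤ (⨆ n, netContent q w (A n)) + ε := by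
        refine measure_maximalCells_iUnion_le monotone_accumulate fun n ↦ ?_
        refine (hq.measure_maximalCells_accumulate_le hA hfin hAS (fun n ↦ (hS n).le) n).trans ?_
        gcongr
        · exact le_iSup (fun n ↦ netContent q w (A n)) n
        · exact (ENNReal.sum_le_tsum _).trans hδε.le

end NetContent

section Capacitability

lemma exists_setOf_forall_lt_le_subset {k : ℕ → ℕ} {V : Set (ℕ → ℕ)} (hV : IsOpen V)
    (hk : Iic k ⊆ V) : ∃ n, {x : ℕ → ℕ | ∀ i < n, x i ≤ k i} ⊆ V := by
  let _ : MetricSpace (ℕ → ℕ) := PiNat.metricSpaceNatNat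
  have hcompact : IsCompact (Iic k) := Icc_bot (a := k) ▸ isCompact_Icc
  obtain ⟨δ, hδ, hδV⟩ := hcompact.exists_thickening_subset_open hV hk
  obtain ⟨n, hn⟩ := exists_pow_lt_of_lt_one hδ one_half_lt_one
  refine ⟨n, fun x hx ↦ hδV (Metric.mem_thickening_iff.2 ⟨x ⊓ k, mem_Iic.2 inf_le_right, ?_⟩)⟩
  have hcyl : x ∈ PiNat.cylinder (x ⊓ k) n := fun i hi ↦ (min_eq_left (hx i hi)).symm
  exact (PiNat.mem_cylinder_iff_dist_le.1 hcyl).trans_lt hn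

variable {X : Type*} [TopologicalSpace X] {A : Set X} {p : Set X → Prop}

/-- **Choquet's capacitability theorem**, with `p` in the role of the property of having capacity
greater than a given number. -/
theorem exists_isCompact_forall_isOpen_of_analyticSet (hA : AnalyticSet A)
    (hmono : ∀ ⦃B C⦄, B ⊆ C → p B → p C)
    (hunion : ∀ B : ℕ → Set X, Monotone B → p (⋃ n, B n) → ∃ n, p (B n)) (hpA : p A) :
    ∃ K ⊆ A, IsCompact K ∧ ∀ U, IsOpen U → K ⊆ U → p U := by
  rw [AnalyticSet] at hA
  obtain rfl | ⟨f, hf, rfl⟩ := hA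
  · exact ⟨∅, subset_rfl, isCompact_empty, fun U _ hU ↦ hmono hU hpA⟩
  have hbound (n : ℕ) (B : {B : Set (ℕ → ℕ) // p (f '' B)}) :
      ∃ k, p (f '' (B.1 ∩ {x | x n ≤ k})) := by
    refine hunion (fun k ↦ f '' (B.1 ∩ {x | x n ≤ k})) (fun k l hkl ↦ ?_) ?_
    · exact image_mono (inter_subset_inter_right _ fun x hx ↦ le_trans hx hkl)
    · have hcover : ⋃ k, {x : ℕ → ℕ | x n ≤ k} = univ :=
        iUnion_eq_univ_iff.2 fun x ↦ ⟨x n, le_refl (x n)⟩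
      rw [← image_iUnion, ← inter_iUnion, hcover, inter_univ]
      exact B.2
  choose bound hbound using hbound
  let box : ℕ → {B : Set (ℕ → ℕ) // p (f '' B)} :=
    Nat.rec ⟨univ, by rwa [image_univ]⟩ fun n B ↦ ⟨_, hbound n B⟩
  let k (n : ℕ) : ℕ := bound n (box n)
  have hbox (n : ℕ) : (box n).1 = {x | ∀ i < n, x i ≤ k i} := by
    induction n with
    | zero => simp [box]
    | succ n ih =>
      have hsucc : (box (n + 1)).1 = (box n).1 ∩ {x | x n ≤ k n} := rfl
      rw [hsucc, ih]
      ext x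
      exact Nat.forall_lt_succ_right.symm
  refine ⟨f '' Iic k, image_subset_range _ _,
    (Icc_bot (a := k) ▸ isCompact_Icc).image hf, fun U hU hKU ↦ ?_⟩
  obtain ⟨n, hn⟩ := exists_setOf_forall_lt_le_subset (hU.preimage hf) (image_subset_iff.1 hKU)
  exact hmono (image_subset_iff.2 hn) (hbox n ▸ (box n).2)

end Capacitability

section DyadicContent

lemma isRefining_floor_two_pow_mul : IsRefining fun (n : ℕ) (x : ℝ) ↦ ⌊2 ^ n * x⌋ := by
  intro k n hkn x y hxy
  have hfloor (z : ℝ) : ⌊2 ^ k * z⌋ = ⌊2 ^ n * z⌋ / (2 ^ (n - k) : ℕ) := by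
    rw [← Int.natCast_mul_floor_div_cancel (n := 2 ^ (n - k)) (by positivity), ← mul_assoc,
      Nat.cast_pow, Nat.cast_ofNat, ← pow_add, Nat.sub_add_cancel hkn]
  simp only [hfloor, hxy]

lemma edist_le_of_floor_two_pow_mul_eq {n : ℕ} {x y : ℝ} (h : ⌊2 ^ n * x⌋ = ⌊2 ^ n * y⌋) :
    edist x y ≤ 2⁻¹ ^ n := by
  have hlt : 2 ^ n * |x - y| < 1 := by
    simpa only [← mul_sub, abs_mul, abs_pow, abs_two] using Int.abs_sub_lt_one_of_floor_eq_floor h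
  have hle : |x - y| ≤ 2⁻¹ ^ n := by
    rw [inv_pow, ← one_div, le_div_iff₀' (by positivity)]
    exact hlt.le
  rw [edist_dist, Real.dist_eq]
  refine (ENNReal.ofReal_le_ofReal hle).trans_eq ?_
  rw [ENNReal.ofReal_pow (by norm_num), ENNReal.ofReal_inv_of_pos two_pos, ENNReal.ofReal_ofNat]

/-- The measure giving every dyadic interval of length `2⁻ⁿ` the weight `2⁻ⁿˢ`. -/
noncomputable def dyadicWeight (s : ℝ) : Measure (ℕ × ℤ) :=
  Measure.sum fun d ↦ ((2⁻¹ ^ d.1 : ℝ≥0∞) ^ s) • Measure.dirac d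

lemma dyadicWeight_singleton (s : ℝ) (d : ℕ × ℤ) :
    dyadicWeight s {d} = (2⁻¹ ^ d.1 : ℝ≥0∞) ^ s :=
  Measure.sum_smul_dirac_singleton

lemma dyadicWeight_eq_tsum (s : ℝ) (S : Set (ℕ × ℤ)) :
    dyadicWeight s S = ∑' d : S, (2⁻¹ ^ d.1.1 : ℝ≥0∞) ^ s := by
  simpa only [preimage_id, dyadicWeight_singleton, eq_comm] using
    tsum_measure_preimage_singleton (μ := dyadicWeight s) (Set.to_countable S) (f := id)
      fun d _ ↦ measurableSet_singleton d

/-- The `s`-dimensional dyadic Hausdorff content. -/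
noncomputable def dyadicContent (s : ℝ) : OuterMeasure ℝ :=
  netContent (fun n x ↦ ⌊2 ^ n * x⌋) (dyadicWeight s)

variable {s : ℝ} {A : Set ℝ}

lemma dyadicContent_le_of_subset_Icc {a : ℝ} {n m : ℕ} (hA : A ⊆ Icc a (a + m * 2⁻¹ ^ n)) :
    dyadicContent s A ≤ (m + 1) * (2⁻¹ ^ n : ℝ≥0∞) ^ s := by
  set j := ⌊2 ^ n * a⌋ with hj
  set S : Finset (ℕ × ℤ) := (Finset.Icc j (j + m)).map ⟨(n, ·), Prod.mk_right_injective n⟩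
  have hcover : A ⊆ netUnion (fun n x ↦ ⌊2 ^ n * x⌋) (S : Set (ℕ × ℤ)) := by
    intro x hx
    obtain ⟨hax, hxa⟩ := hA hx
    have hupper : (2 : ℝ) ^ n * x ≤ 2 ^ n * a + m := by
      calc (2 : ℝ) ^ n * x ≤ 2 ^ n * (a + m * 2⁻¹ ^ n) := by gcongr
        _ = 2 ^ n * a + m := by rw [inv_pow]; field_simp
    have hmem : ⌊(2 : ℝ) ^ n * x⌋ ∈ Finset.Icc j (j + m) := by
      rw [Finset.mem_Icc, hj, ← Int.floor_add_natCast]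
      exact ⟨Int.floor_le_floor (by gcongr), Int.floor_le_floor hupper⟩
    exact ⟨n, Finset.mem_coe.2 (Finset.mem_map_of_mem _ hmem)⟩
  have hcard : (Finset.Icc j (j + m)).card = m + 1 := by rw [Int.card_Icc]; lia
  calc dyadicContent s A ≤ dyadicWeight s S := netContent_le hcover
    _ = (m + 1) * (2⁻¹ ^ n : ℝ≥0∞) ^ s := by
      rw [dyadicWeight_eq_tsum, Finset.tsum_subtype' S fun d ↦ (2⁻¹ ^ d.1 : ℝ≥0∞) ^ s,
        Finset.sum_map]
      simp only [Function.Embedding.coeFn_mk, Finset.sum_const, hcard, nsmul_eq_mul, Nat.cast_add,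
        Nat.cast_one]

lemma dyadicContent_ne_top (hA : Bornology.IsBounded A) : dyadicContent s A ≠ ∞ := by
  obtain ⟨a, b, hab⟩ := bddBelow_bddAbove_iff_subset_Icc.1 (isBounded_iff_bddBelow_bddAbove.1 hA)
  obtain ⟨m, hm⟩ := exists_nat_ge (b - a)
  have hsub : A ⊆ Icc a (a + m * 2⁻¹ ^ 0) := fun x hx ↦ ⟨(hab hx).1, by linarith [(hab hx).2]⟩
  refine ne_top_of_le_ne_top ?_ (dyadicContent_le_of_subset_Icc hsub)
  simp

lemma exists_isOpen_dyadicContent_le {c : ℝ≥0∞} (hc : dyadicContent s A < c) :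
    ∃ U, IsOpen U ∧ A ⊆ U ∧ dyadicContent s U ≤ 3 * c := by
  obtain ⟨S, hAS, hSc⟩ := exists_cover_of_netContent_lt hc
  let I (d : ℕ × ℤ) : Set ℝ := {x | 2 ^ d.1 * x ∈ Ioo (d.2 - 1 : ℝ) (d.2 + 1)}
  have hI (d : ℕ × ℤ) : dyadicContent s (I d) ≤ 3 * (2⁻¹ ^ d.1 : ℝ≥0∞) ^ s := by
    refine (dyadicContent_le_of_subset_Icc (n := d.1) (m := 2) (a := (d.2 - 1) * 2⁻¹ ^ d.1)
      fun x hx ↦ ?_).trans_eq (by norm_num)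
    obtain ⟨hx₁, hx₂⟩ := hx
    rw [inv_pow, mem_Icc, ← add_mul, ← div_eq_mul_inv, ← div_eq_mul_inv,
      div_le_iff₀' (by positivity), le_div_iff₀' (by positivity)]
    exact ⟨hx₁.le, by push_cast; linarith⟩
  refine ⟨⋃ d ∈ S, I d, isOpen_biUnion fun d _ ↦ isOpen_Ioo.preimage (by fun_prop), ?_, ?_⟩
  · intro x hx
    obtain ⟨n, hn⟩ := hAS hx
    exact mem_iUnion₂.2 ⟨_, hn, by linarith [Int.floor_le (2 ^ n * x)], Int.lt_floor_add_one _⟩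
  · calc dyadicContent s (⋃ d ∈ S, I d) ≤ ∑' d : S, dyadicContent s (I d) :=
          measure_biUnion_le _ (Set.to_countable S) I
      _ ≤ ∑' d : S, 3 * (2⁻¹ ^ d.1.1 : ℝ≥0∞) ^ s := ENNReal.tsum_le_tsum fun d ↦ hI d
      _ = 3 * dyadicWeight s S := by rw [ENNReal.tsum_mul_left, dyadicWeight_eq_tsum]
      _ ≤ 3 * c := by gcongr

lemma hausdorffMeasure_eq_zero_of_dyadicContent_eq_zero (hs : 0 < s)
    (hA : dyadicContent s A = 0) : μH[s] A = 0 := by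
  let ε (N : ℕ) : ℝ≥0∞ := 2⁻¹ ^ N
  have hε : Tendsto ε atTop (𝓝 0) :=
    ENNReal.tendsto_pow_atTop_nhds_zero_of_lt_one (ENNReal.inv_lt_one.2 ENNReal.one_lt_two)
  have hcover (N : ℕ) : ∃ S, A ⊆ netUnion (fun n x ↦ ⌊2 ^ n * x⌋) S ∧ dyadicWeight s S < ε N ^ s :=
    exists_cover_of_netContent_lt (hA.trans_lt
      (ENNReal.rpow_pos (ENNReal.pow_pos (by simp) N) (ENNReal.pow_ne_top (by simp))))
  choose S hAS hS using hcover
  let cell (d : ℕ × ℤ) : Set ℝ := {x | ⌊2 ^ d.1 * x⌋ = d.2}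
  have hcell (d : ℕ × ℤ) : Metric.ediam (cell d) ≤ ε d.1 :=
    Metric.ediam_le fun x hx y hy ↦ edist_le_of_floor_two_pow_mul_eq (hx.trans hy.symm)
  have hfine (N : ℕ) (d : S N) : ε d.1.1 ≤ ε N := by
    rw [← ENNReal.rpow_le_rpow_iff hs, ← dyadicWeight_singleton]
    exact (measure_mono (singleton_subset_iff.2 d.2)).trans (hS N).le
  have hsub (N : ℕ) : A ⊆ ⋃ d : S N, cell d := fun x hx ↦
    let ⟨n, hn⟩ := hAS N hx
    mem_iUnion.2 ⟨⟨_, hn⟩, rfl⟩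
  refine le_antisymm ?_ zero_le
  calc μH[s] A ≤ liminf (fun N ↦ ∑' d : S N, Metric.ediam (cell d) ^ s) atTop :=
        Measure.hausdorffMeasure_le_liminf_tsum s A ε hε _
          (.of_forall fun N d ↦ (hcell d).trans (hfine N d)) (.of_forall hsub)
    _ ≤ liminf (fun N ↦ ε N ^ s) atTop := by
        refine liminf_le_liminf (.of_forall fun N ↦ le_trans ?_ (hS N).le)
        rw [dyadicWeight_eq_tsum]
        exact ENNReal.tsum_le_tsum fun d ↦ ENNReal.rpow_le_rpow (hcell d) hs.le
    _ = 0 := by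
        have hlim := ((ENNReal.continuous_rpow_const (y := s)).tendsto 0).comp hε
        rw [ENNReal.zero_rpow_of_pos hs] at hlim
        exact hlim.liminf_eq

theorem exists_isCompact_dyadicContent_ne_zero (hA : AnalyticSet A) {s : ℝ≥0} (hs : 0 < s)
    (hdim : s < dimH A) : ∃ K ⊆ A, IsCompact K ∧ dyadicContent s K ≠ 0 := by
  have hpos : dyadicContent s A ≠ 0 := fun h ↦ by
    have hzero := hausdorffMeasure_eq_zero_of_dyadicContent_eq_zero (NNReal.coe_pos.2 hs) h
    simp [hausdorffMeasure_of_lt_dimH hdim] at hzero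
  obtain ⟨η, hη, hηA⟩ := exists_between (pos_iff_ne_zero.2 hpos)
  obtain ⟨K, hKA, hK, hKU⟩ := exists_isCompact_forall_isOpen_of_analyticSet
    (p := fun B ↦ η < dyadicContent s B) hA (fun B C hBC hB ↦ hB.trans_le (measure_mono hBC))
    (fun B hB h ↦ by
      rwa [dyadicContent, isRefining_floor_two_pow_mul.netContent_iUnion _ hB, lt_iSup_iff] at h)
    hηA
  refine ⟨K, hKA, hK, fun hK₀ ↦ ?_⟩
  obtain ⟨U, hU, hKsub, hUη⟩ := exists_isOpen_dyadicContent_le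
    (hK₀.trans_lt (ENNReal.div_pos hη.ne' (ENNReal.ofNat_ne_top (n := 3))))
  exact ((hKU U hU hKsub).trans_le hUη).not_ge ENNReal.mul_div_le

end DyadicContent

section Frostman

/-- **Frostman's condition**: small balls satisfy `μ (closedEBall x r) ≲ r ^ s` uniformly in the
centre. -/
def IsFrostman {X : Type*} [PseudoEMetricSpace X] [MeasurableSpace X] (μ : Measure X) (s : ℝ) :
    Prop :=
  ∃ C : ℝ≥0, ∀ x r, 0 < r → r ≤ 1 → μ (Metric.closedEBall x r) ≤ C * r ^ s

lemma exists_inv_two_pow_succ_lt_le {r : ℝ≥0∞} (hr₀ : 0 < r) (hr₁ : r ≤ 1) :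
    ∃ k : ℕ, 2⁻¹ ^ (k + 1) < r ∧ r ≤ 2⁻¹ ^ k := by
  classical
  have hex := ENNReal.exists_inv_two_pow_lt hr₀.ne'
  have hpos : Nat.find hex ≠ 0 := fun h ↦ by
    simpa [h, hr₁.not_gt] using Nat.find_spec hex
  obtain ⟨k, hk⟩ := Nat.exists_eq_succ_of_ne_zero hpos
  rw [Nat.succ_eq_add_one] at hk
  exact ⟨k, by simpa only [hk] using Nat.find_spec hex,
    not_lt.1 (Nat.find_min hex (hk ▸ k.lt_succ_self))⟩

lemma closedEBall_inv_two_pow (x : ℝ) (k : ℕ) :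
    Metric.closedEBall x (2⁻¹ ^ k) = Icc (x - 2⁻¹ ^ k) (x + 2⁻¹ ^ k) := by
  rw [← Real.closedBall_eq_Icc, ← Metric.closedEBall_ofReal (by positivity),
    ENNReal.ofReal_pow (by norm_num), ENNReal.ofReal_inv_of_pos two_pos, ENNReal.ofReal_ofNat]

lemma isFrostman_of_forall_closedEBall_inv_two_pow_le {X : Type*} [PseudoEMetricSpace X]
    [MeasurableSpace X] {μ : Measure X} {s : ℝ} (hs : 0 ≤ s) {C : ℝ≥0}
    (h : ∀ x (k : ℕ), μ (Metric.closedEBall x (2⁻¹ ^ k)) ≤ C * (2⁻¹ ^ k) ^ s) :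
    IsFrostman μ s := by
  refine ⟨C * 2 ^ s, fun x r hr₀ hr₁ ↦ ?_⟩
  obtain ⟨k, hkr, hrk⟩ := exists_inv_two_pow_succ_lt_le hr₀ hr₁
  have hscale : (2⁻¹ ^ k : ℝ≥0∞) ≤ 2 * r := by
    calc (2⁻¹ ^ k : ℝ≥0∞) = 2 * 2⁻¹ ^ (k + 1) := by
          rw [pow_succ', ← mul_assoc, ENNReal.mul_inv_cancel two_ne_zero ENNReal.ofNat_ne_top,
            one_mul]
      _ ≤ 2 * r := by gcongr
  calc μ (Metric.closedEBall x r) ≤ μ (Metric.closedEBall x (2⁻¹ ^ k)) :=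
        measure_mono (Metric.closedEBall_subset_closedEBall hrk)
    _ ≤ C * (2⁻¹ ^ k) ^ s := h x k
    _ ≤ C * (2 * r) ^ s := by gcongr
    _ = (C * 2 ^ s : ℝ≥0) * r ^ s := by
        rw [ENNReal.mul_rpow_of_nonneg _ _ hs, ENNReal.coe_mul, ENNReal.coe_rpow_of_nonneg _ hs,
          ENNReal.coe_ofNat, mul_assoc]

lemma IsFrostman.prod {X Y : Type*} [PseudoEMetricSpace X] [PseudoEMetricSpace Y]
    [MeasurableSpace X] [MeasurableSpace Y] {μ : Measure X} {ν : Measure Y} [SFinite ν] {s t : ℝ}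
    (hμ : IsFrostman μ s) (hν : IsFrostman ν t) : IsFrostman (μ.prod ν) (s + t) := by
  obtain ⟨C, hC⟩ := hμ
  obtain ⟨D, hD⟩ := hν
  refine ⟨C * D, fun ⟨x, y⟩ r hr₀ hr₁ ↦ ?_⟩
  calc μ.prod ν (Metric.closedEBall (x, y) r)
      = μ (Metric.closedEBall x r) * ν (Metric.closedEBall y r) := by
        rw [← Metric.closedEBall_prod_same, Measure.prod_prod]
    _ ≤ (C * r ^ s) * (D * r ^ t) := mul_le_mul' (hC x r hr₀ hr₁) (hD y r hr₀ hr₁)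
    _ = (C * D : ℝ≥0) * r ^ (s + t) := by
        rw [ENNReal.rpow_add _ _ hr₀.ne' (hr₁.trans_lt ENNReal.one_lt_top).ne, ENNReal.coe_mul]
        ring

/- `μ` is the Stieltjes measure of `x ↦ h (Iic x)`; enlarging `b` to `b'` and `a` to `a'` accounts
for the jumps of this function. -/
lemma exists_measure_Ioc_le_outerMeasure {h : OuterMeasure ℝ} (hfin : h univ ≠ ∞) :
    ∃ μ : Measure ℝ, (∀ a b b', b < b' → μ (Ioc a b) ≤ h (Ioc a b')) ∧
      ∀ a a' b, a < a' → h (Iic b) ≤ h (Iic a') + μ (Ioc a b) := by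
  have hne (s : Set ℝ) : h s ≠ ∞ := ne_top_of_le_ne_top hfin (measure_mono (subset_univ s))
  have hmono : Monotone fun x ↦ (h (Iic x)).toReal := fun a b hab ↦
    ENNReal.toReal_mono (hne _) (measure_mono (Iic_subset_Iic.2 hab))
  refine ⟨hmono.stieltjesFunction.measure, fun a b b' hb ↦ ?_, fun a a' b ha ↦ ?_⟩ <;>
    rw [StieltjesFunction.measure_Ioc, hmono.stieltjesFunction_eq, hmono.stieltjesFunction_eq]
  · refine ENNReal.ofReal_le_of_le_toReal (sub_le_iff_le_add.2 ?_)
    calc _ ≤ (h (Iic b')).toReal := hmono.rightLim_le hb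
      _ ≤ (h (Ioc a b')).toReal + (h (Iic a)).toReal := by
          rw [← ENNReal.toReal_add (hne _) (hne _)]
          refine ENNReal.toReal_mono (ENNReal.add_ne_top.2 ⟨hne _, hne _⟩) ?_
          refine (measure_mono fun x hx ↦ ?_).trans (measure_union_le _ _)
          exact (lt_or_ge a x).imp (⟨·, hx⟩) id
      _ ≤ _ := by gcongr; exact hmono.le_rightLim le_rfl
  · rw [← ENNReal.ofReal_toReal (hne (Iic b)), ← ENNReal.ofReal_toReal (hne (Iic a'))]
    refine (ENNReal.ofReal_le_ofReal ?_).trans ENNReal.ofReal_add_le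
    linarith [hmono.le_rightLim (le_refl b), hmono.rightLim_le ha]

theorem exists_isFiniteMeasure_le_outerMeasure {h : OuterMeasure ℝ} (hfin : h univ ≠ ∞)
    {K : Set ℝ} (hK : IsCompact K) (hKh : h Kᶜ = 0) :
    ∃ μ : Measure ℝ, IsFiniteMeasure μ ∧ μ Kᶜ = 0 ∧ h univ ≤ μ univ ∧
      ∀ a b b', b < b' → μ (Ioc a b) ≤ h (Ioc a b') := by
  obtain ⟨μ, hupper, hlower⟩ := exists_measure_Ioc_le_outerMeasure hfin
  obtain ⟨l, hl⟩ := hK.bddBelow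
  obtain ⟨u, hu⟩ := hK.bddAbove
  have hcompl : μ Kᶜ = 0 := by
    refine measure_null_of_locally_null _ fun x hx ↦ ?_
    obtain ⟨c, d, ⟨hcx, hxd⟩, hcd⟩ :=
      mem_nhds_iff_exists_Ioo_subset.1 (hK.isClosed.compl_mem_nhds hx)
    obtain ⟨b, hxb, hbd⟩ := exists_between hxd
    obtain ⟨b', hbb', hbd'⟩ := exists_between hbd
    have hsub : Ioc c b' ⊆ Kᶜ := fun y hy ↦ hcd ⟨hy.1, hy.2.trans_lt hbd'⟩
    exact ⟨Ioc c b, mem_nhdsWithin_of_mem_nhds (Ioc_mem_nhds hcx hxb),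
      nonpos_iff_eq_zero.1 ((hupper c b b' hbb').trans_eq (measure_mono_null hsub hKh))⟩
  refine ⟨μ, ⟨?_⟩, hcompl, ?_, hupper⟩
  · calc μ univ ≤ μ (Ioc (l - 1) u) + μ Kᶜ := by
          refine (measure_mono fun x _ ↦ ?_).trans (measure_union_le _ _)
          exact (em (x ∈ K)).imp (fun hx ↦ ⟨by linarith [hl hx], hu hx⟩) id
      _ ≤ h univ + 0 := by
          rw [hcompl]
          gcongr
          exact (hupper _ u (u + 1) (lt_add_one u)).trans (measure_mono (subset_univ _))
      _ < ∞ := by rwa [add_zero, lt_top_iff_ne_top]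
  · have hleft : h (Iic (l - 1)) = 0 := by
      refine measure_mono_null (t := Kᶜ) (fun x hx hxK ↦ ?_) hKh
      linarith [hl hxK, mem_Iic.1 hx]
    calc h univ ≤ h (Iic u) + h Kᶜ := by
          refine (measure_mono fun x _ ↦ ?_).trans (measure_union_le _ _)
          exact (em (x ∈ K)).imp (fun hx ↦ hu hx) id
      _ ≤ (h (Iic (l - 1)) + μ (Ioc (l - 2) u)) + h Kᶜ := by
          gcongr
          exact hlower _ _ _ (by linarith)
      _ ≤ μ univ := by
          rw [hleft, hKh, zero_add, add_zero]
          exact measure_mono (subset_univ _)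

theorem exists_isFrostman_of_isCompact {K : Set ℝ} (hK : IsCompact K) {s : ℝ} (hs : 0 ≤ s)
    (hKs : dyadicContent s K ≠ 0) :
    ∃ μ : Measure ℝ, IsFiniteMeasure μ ∧ μ ≠ 0 ∧ μ Kᶜ = 0 ∧ IsFrostman μ s := by
  set h : OuterMeasure ℝ := OuterMeasure.restrict K (dyadicContent s) with h_def
  have h_univ : h univ = dyadicContent s K := by
    rw [h_def, OuterMeasure.restrict_apply, univ_inter]
  have h_compl : h Kᶜ = 0 := by
    rw [h_def, OuterMeasure.restrict_apply, compl_inter_self, measure_empty]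
  have hfin : h univ ≠ ∞ := h_univ ▸ dyadicContent_ne_top hK.isBounded
  obtain ⟨μ, hμ, hμK, hle, hupper⟩ := exists_isFiniteMeasure_le_outerMeasure hfin hK h_compl
  refine ⟨μ, hμ, fun hμ₀ ↦ hKs ?_, hμK, ?_⟩
  · simpa only [h_univ, hμ₀, Measure.coe_zero, Pi.zero_apply, nonpos_iff_eq_zero] using hle
  · refine isFrostman_of_forall_closedEBall_inv_two_pow_le hs (C := 5) fun x k ↦ ?_
    have hpos : (0 : ℝ) < 2⁻¹ ^ k := by positivity
    set ε : ℝ := 2⁻¹ ^ k with hε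
    calc μ (Metric.closedEBall x (2⁻¹ ^ k)) ≤ μ (Ioc (x - 2 * ε) (x + ε)) := by
          rw [closedEBall_inv_two_pow, ← hε]
          exact measure_mono fun y hy ↦ ⟨by linarith [hy.1], hy.2⟩
      _ ≤ h (Ioc (x - 2 * ε) (x + 2 * ε)) := hupper _ _ _ (by linarith)
      _ ≤ dyadicContent s (Ioc (x - 2 * ε) (x + 2 * ε)) := by
          rw [h_def, OuterMeasure.restrict_apply]
          exact measure_mono inter_subset_left
      _ ≤ (4 + 1) * (2⁻¹ ^ k) ^ s := by
          refine (dyadicContent_le_of_subset_Icc (n := k) (m := 4)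
            (a := x - 2 * ε) fun y hy ↦ ⟨hy.1.le, ?_⟩).trans_eq (by norm_num)
          rw [← hε]
          push_cast
          linarith [hy.2]
      _ = (5 : ℝ≥0) * (2⁻¹ ^ k) ^ s := by norm_num

theorem exists_isFrostman_of_lt_dimH {A : Set ℝ} (hA : AnalyticSet A) {s : ℝ≥0} (hs : 0 < s)
    (hdim : s < dimH A) :
    ∃ μ : Measure ℝ, IsFiniteMeasure μ ∧ μ ≠ 0 ∧ μ Aᶜ = 0 ∧ IsFrostman μ s := by
  obtain ⟨K, hKA, hK, hKs⟩ := exists_isCompact_dyadicContent_ne_zero hA hs hdim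
  obtain ⟨μ, hμ, hμ₀, hμK, hμs⟩ := exists_isFrostman_of_isCompact hK s.2 hKs
  exact ⟨μ, hμ, hμ₀, measure_mono_null (compl_subset_compl.2 hKA) hμK, hμs⟩

end Frostman

section Energy

lemma edist_rpow_neg_le_one_add_tsum_indicator {X : Type*} [PseudoEMetricSpace X] {s : ℝ}
    (hs : 0 ≤ s) (x y : X) :
    edist x y ^ (-s) ≤ 1 + ∑' k : ℕ, (Metric.closedEBall x (2⁻¹ ^ k)).indicator
      (fun _ ↦ (2⁻¹ ^ (k + 1)) ^ (-s)) y := by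
  obtain hxy | hxy := lt_or_ge 1 (edist x y)
  · refine le_add_right ?_
    rw [ENNReal.rpow_neg, ENNReal.inv_le_one]
    simpa only [ENNReal.one_rpow] using ENNReal.rpow_le_rpow hxy.le hs
  refine le_add_left ?_
  obtain hxy₀ | hxy₀ := eq_zero_or_pos (edist x y)
  · have hterm (k : ℕ) : (1 : ℝ≥0∞) ≤ (Metric.closedEBall x (2⁻¹ ^ k)).indicator
        (fun _ ↦ (2⁻¹ ^ (k + 1)) ^ (-s)) y := by
      rw [indicator_of_mem (Metric.mem_closedEBall'.2 (hxy₀.trans_le zero_le)), ENNReal.rpow_neg,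
        ENNReal.one_le_inv]
      exact ENNReal.rpow_le_one (pow_le_one₀ zero_le (by simp)) hs
    calc _ ≤ (∞ : ℝ≥0∞) := le_top
      _ = ∑' _ : ℕ, 1 := (ENNReal.tsum_const_eq_top_of_ne_zero one_ne_zero).symm
      _ ≤ _ := ENNReal.tsum_le_tsum hterm
  · obtain ⟨k, hkr, hrk⟩ := exists_inv_two_pow_succ_lt_le hxy₀ hxy
    refine le_trans ?_ (ENNReal.le_tsum k)
    rw [indicator_of_mem (Metric.mem_closedEBall'.2 hrk), ENNReal.rpow_neg, ENNReal.rpow_neg]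
    gcongr

variable {X : Type*} [PseudoEMetricSpace X] [MeasurableSpace X] {μ : Measure X} {s t : ℝ}

/-- The Riesz energy `∬ |x - y|⁻ˢ dμ dμ`. The diagonal contributes `∞` when it is charged. -/
noncomputable def rieszEnergy (s : ℝ) (μ : Measure X) : ℝ≥0∞ :=
  ∫⁻ x, ∫⁻ y, edist x y ^ (-s) ∂μ ∂μ

lemma lintegral_edist_rpow_neg_le [OpensMeasurableSpace X] (hs : 0 ≤ s) (x : X) :
    ∫⁻ y, edist x y ^ (-s) ∂μ ≤
      μ univ + ∑' k : ℕ, (2⁻¹ ^ (k + 1)) ^ (-s) * μ (Metric.closedEBall x (2⁻¹ ^ k)) := by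
  have hmeas (k : ℕ) : MeasurableSet (Metric.closedEBall x (2⁻¹ ^ k)) :=
    Metric.isClosed_closedEBall.measurableSet
  calc ∫⁻ y, edist x y ^ (-s) ∂μ
      ≤ ∫⁻ y, 1 + ∑' k : ℕ, (Metric.closedEBall x (2⁻¹ ^ k)).indicator
          (fun _ ↦ (2⁻¹ ^ (k + 1)) ^ (-s)) y ∂μ :=
        lintegral_mono fun y ↦ edist_rpow_neg_le_one_add_tsum_indicator hs x y
    _ = _ := by
        rw [lintegral_add_left measurable_const, lintegral_one,
          lintegral_tsum fun k ↦ (measurable_const.indicator (hmeas k)).aemeasurable]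
        simp only [lintegral_indicator_const (hmeas _)]

theorem IsFrostman.rieszEnergy_lt_top [OpensMeasurableSpace X] [IsFiniteMeasure μ]
    (hμ : IsFrostman μ t) (hs : 0 ≤ s) (hst : s < t) : rieszEnergy s μ < ∞ := by
  obtain ⟨C, hC⟩ := hμ
  set b : ℝ≥0∞ := 2⁻¹ with hb
  have hb₀ : b ≠ 0 := by simp [hb]
  have hb_top : b ≠ ∞ := by simp [hb]
  have hb₁ : b < 1 := ENNReal.inv_lt_one.2 ENNReal.one_lt_two
  have hscale (k : ℕ) : (b ^ (k + 1)) ^ (-s) * (b ^ k) ^ t = b ^ (-s) * (b ^ (t - s)) ^ k := by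
    simp only [← ENNReal.rpow_natCast, ← ENNReal.rpow_mul, ← ENNReal.rpow_add _ _ hb₀ hb_top]
    push_cast
    ring_nf
  have hpotential (x : X) : ∫⁻ y, edist x y ^ (-s) ∂μ ≤
      μ univ + C * b ^ (-s) * (1 - b ^ (t - s))⁻¹ := by
    refine (lintegral_edist_rpow_neg_le hs x).trans ?_
    rw [← ENNReal.tsum_geometric, ← ENNReal.tsum_mul_left]
    gcongr μ univ + ?_
    refine ENNReal.tsum_le_tsum fun k ↦ ?_
    calc _ ≤ (b ^ (k + 1)) ^ (-s) * (C * (b ^ k) ^ t) := by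
          gcongr
          exact hC x _ (ENNReal.pow_pos (pos_iff_ne_zero.2 hb₀) k) (pow_le_one₀ zero_le hb₁.le)
      _ = C * b ^ (-s) * (b ^ (t - s)) ^ k := by rw [mul_assoc, ← hscale, mul_left_comm]
  have hsum : (1 - b ^ (t - s))⁻¹ ≠ ∞ :=
    ENNReal.inv_ne_top.2 (tsub_pos_of_lt (ENNReal.rpow_lt_one hb₁ (sub_pos.2 hst))).ne'
  refine (lintegral_mono hpotential).trans_lt ?_
  rw [lintegral_const]
  refine ENNReal.mul_lt_top (ENNReal.add_lt_top.2 ⟨measure_lt_top μ univ, ?_⟩)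
    (measure_lt_top μ univ)
  exact ENNReal.mul_lt_top (ENNReal.mul_lt_top ENNReal.coe_lt_top
    (ENNReal.rpow_ne_top_of_ne_zero hb₀ hb_top).lt_top) hsum.lt_top

end Energy

section AbsolutelyContinuous

lemma absolutelyContinuous_of_ae_liminf_div_ne_top {α : Type*} [MetricSpace α]
    [SecondCountableTopology α] [HasBesicovitchCovering α] [MeasurableSpace α] [BorelSpace α]
    {ρ m : Measure α} [IsLocallyFiniteMeasure ρ] [IsLocallyFiniteMeasure m] {r : ℕ → ℝ}
    (hr : Tendsto r atTop (𝓝[>] 0))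
    (h : ∀ᵐ x ∂ρ, liminf (fun n ↦ ρ (Metric.closedBall x (r n)) / m (Metric.closedBall x (r n)))
      atTop ≠ ∞) : ρ ≪ m := by
  refine Measure.AbsolutelyContinuous.mk fun N hN hmN ↦ ?_
  set τ := ρ.restrict N with hτ
  have hsing : m ⟂ₘ τ := .mk (s := N) (t := Nᶜ) hmN
    (by rw [hτ, Measure.restrict_apply hN.compl, compl_inter_self, measure_empty])
    (union_compl_self N).ge
  let v := Besicovitch.vitaliFamily τ
  have hfalse : ∀ᵐ _ ∂τ, False := by
    filter_upwards [ae_restrict_of_ae h, v.ae_eventually_measure_zero_of_singular hsing,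
      v.ae_eventually_measure_pos] with x hx hdensity hpos
    refine hx (top_le_iff.1 ?_)
    have hball := (Besicovitch.tendsto_filterAt τ x).comp hr
    have hinv := (tendsto_inv_iff.2 hdensity).comp hball
    rw [ENNReal.inv_zero] at hinv
    rw [← hinv.liminf_eq]
    refine liminf_le_liminf ?_
    filter_upwards [hball.eventually hpos, hball.eventually (v.eventually_measure_lt_top x)]
      with n hn₀ hn_top
    simp only [Function.comp_apply] at hn₀ hn_top ⊢
    rw [ENNReal.inv_div (.inl hn_top.ne) (.inl hn₀.ne')]
    gcongr
    exact Measure.restrict_le_self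
  rw [← Measure.restrict_eq_zero, ← hτ, ← ae_eq_bot]
  exact eventually_false_iff_eq_bot.1 hfalse

end AbsolutelyContinuous

section Projection

variable {Λ X Y : Type*} [MeasurableSpace Λ] [MeasurableSpace X] {σ : Measure X}
  [PseudoMetricSpace Y] [SecondCountableTopology Y] [MeasurableSpace Y] [OpensMeasurableSpace Y]
  {π : Λ → X → Y}

lemma measurableSet_setOf_dist_le (hπ : Measurable (Function.uncurry π)) (r : ℝ) :
    MeasurableSet {w : (Λ × X) × X | dist (π w.1.1 w.2) (π w.1.1 w.1.2) ≤ r} :=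
  measurableSet_le
    (.dist (hπ.comp (measurable_fst.fst.prodMk measurable_snd)) (hπ.comp measurable_fst))
    measurable_const

lemma measurable_measure_setOf_dist_le [SFinite σ] (hπ : Measurable (Function.uncurry π))
    (r : ℝ) : Measurable fun z : Λ × X ↦ σ {q | dist (π z.1 q) (π z.1 z.2) ≤ r} :=
  measurable_measure_prodMk_left (measurableSet_setOf_dist_le hπ r)

variable {κ : Measure Λ} [SFinite κ] [PseudoEMetricSpace X] {s : ℝ}

lemma lintegral_measure_setOf_dist_le [SFinite σ] (hπ : Measurable (Function.uncurry π)) {r : ℝ}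
    {c : ℝ≥0∞} (hc : c ≠ ∞)
    (htrans : ∀ p q, κ {e | dist (π e q) (π e p) ≤ r} ≤ c * edist p q ^ (-s)) :
    ∫⁻ z, σ {q | dist (π z.1 q) (π z.1 z.2) ≤ r} ∂(κ.prod σ) ≤ c * rieszEnergy s σ := by
  have hswap (p : X) : ∫⁻ e, σ {q | dist (π e q) (π e p) ≤ r} ∂κ =
      ∫⁻ q, κ {e | dist (π e q) (π e p) ≤ r} ∂σ := by
    have hset : MeasurableSet {z : Λ × X | dist (π z.1 z.2) (π z.1 p) ≤ r} :=
      (measurable_fst.prodMk measurable_const).prodMk measurable_snd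
        (measurableSet_setOf_dist_le hπ r)
    exact (Measure.prod_apply hset).symm.trans (Measure.prod_apply_symm hset)
  calc ∫⁻ z, σ {q | dist (π z.1 q) (π z.1 z.2) ≤ r} ∂(κ.prod σ)
      = ∫⁻ p, ∫⁻ e, σ {q | dist (π e q) (π e p) ≤ r} ∂κ ∂σ :=
        lintegral_prod_symm' _ (measurable_measure_setOf_dist_le hπ r)
    _ = ∫⁻ p, ∫⁻ q, κ {e | dist (π e q) (π e p) ≤ r} ∂σ ∂σ := by simp only [hswap]
    _ ≤ ∫⁻ p, ∫⁻ q, c * edist p q ^ (-s) ∂σ ∂σ := by gcongr with p q; exact htrans p q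
    _ = c * rieszEnergy s σ := by simp only [lintegral_const_mul' c _ hc, rieszEnergy]

variable {E : Type*} [NormedAddCommGroup E] [NormedSpace ℝ E] [FiniteDimensional ℝ E]
  [MeasurableSpace E] [BorelSpace E] {π : Λ → X → E}

lemma ae_ae_liminf_measure_setOf_dist_le_lt_top [SFinite σ]
    (hπ : Measurable (Function.uncurry π)) (m : Measure E) [m.IsAddHaarMeasure] {C : ℝ≥0∞}
    (hC : C ≠ ∞)
    (htrans : ∀ p q, ∀ r > 0,
      κ {e | dist (π e q) (π e p) ≤ r} ≤ C * m (Metric.closedBall 0 r) * edist p q ^ (-s))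
    (hσ : rieszEnergy s σ < ∞) {r : ℕ → ℝ} (hr : ∀ n, 0 < r n) :
    ∀ᵐ e ∂κ, ∀ᵐ p ∂σ, liminf (fun n ↦ σ {q | dist (π e q) (π e p) ≤ r n} /
      m (Metric.closedBall 0 (r n))) atTop < ∞ := by
  have hball₀ (n : ℕ) : m (Metric.closedBall 0 (r n)) ≠ 0 :=
    (Metric.measure_closedBall_pos m 0 (hr n)).ne'
  have hball_top (n : ℕ) : m (Metric.closedBall 0 (r n)) ≠ ∞ := measure_closedBall_lt_top.ne
  let density (n : ℕ) (z : Λ × X) : ℝ≥0∞ :=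
    σ {q | dist (π z.1 q) (π z.1 z.2) ≤ r n} / m (Metric.closedBall 0 (r n))
  have hdensity_meas (n : ℕ) : Measurable (density n) :=
    (measurable_measure_setOf_dist_le hπ (r n)).div_const _
  have hdensity_le (n : ℕ) : ∫⁻ z, density n z ∂(κ.prod σ) ≤ C * rieszEnergy s σ := by
    simp only [density, ENNReal.div_eq_inv_mul]
    rw [lintegral_const_mul' _ _ (ENNReal.inv_ne_top.2 (hball₀ n)), ← ENNReal.div_eq_inv_mul]
    refine ENNReal.div_le_of_le_mul ?_
    rw [mul_right_comm]
    exact lintegral_measure_setOf_dist_le hπ (ENNReal.mul_ne_top hC (hball_top n))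
      fun p q ↦ htrans p q (r n) (hr n)
  have hfatou : ∫⁻ z, liminf (fun n ↦ density n z) atTop ∂(κ.prod σ) ≠ ∞ := by
    refine ne_top_of_le_ne_top (ENNReal.mul_ne_top hC hσ.ne)
      ((lintegral_liminf_le hdensity_meas).trans ?_)
    exact (liminf_le_liminf (.of_forall hdensity_le)).trans_eq (liminf_const _)
  exact Measure.ae_ae_of_ae_prod (ae_lt_top (Measurable.liminf hdensity_meas) hfatou)

/-- **Marstrand's projection theorem** for measures; `htrans` is the transversality of the family
of maps `π`. -/
theorem ae_map_absolutelyContinuous_of_rieszEnergy_lt_top [IsFiniteMeasure σ]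
    (hπ : Measurable (Function.uncurry π)) (m : Measure E) [m.IsAddHaarMeasure] {C : ℝ≥0∞}
    (hC : C ≠ ∞)
    (htrans : ∀ p q, ∀ r > 0,
      κ {e | dist (π e q) (π e p) ≤ r} ≤ C * m (Metric.closedBall 0 r) * edist p q ^ (-s))
    (hσ : rieszEnergy s σ < ∞) : ∀ᵐ e ∂κ, σ.map (π e) ≪ m := by
  obtain ⟨r, -, hr_pos, hr_lim⟩ := exists_seq_strictAnti_tendsto (0 : ℝ)
  filter_upwards [ae_ae_liminf_measure_setOf_dist_le_lt_top hπ m hC htrans hσ hr_pos] with e he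
  have hπe : Measurable (π e) := hπ.of_uncurry_left
  have hmeas (n : ℕ) : Measurable fun x ↦ σ.map (π e) (Metric.closedBall x (r n)) :=
    measurable_measure_prodMk_left (measurableSet_le (measurable_snd.dist measurable_fst)
      measurable_const)
  refine absolutelyContinuous_of_ae_liminf_div_ne_top
    (tendsto_nhdsWithin_iff.2 ⟨hr_lim, .of_forall hr_pos⟩) ?_
  simp only [Measure.addHaar_closedBall_center]
  refine (ae_map_iff hπe.aemeasurable
    (Measurable.liminf (fun n ↦ (hmeas n).div_const _) (measurableSet_singleton ∞).compl)).2 ?_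
  filter_upwards [he] with p hp
  simp only [Measure.map_apply hπe Metric.isClosed_closedBall.measurableSet]
  exact hp.ne

end Projection

section Plane

lemma setOf_abs_add_mul_le_subset_closedBall {u v r : ℝ} (hv : v ≠ 0) :
    {e : ℝ | |u + e * v| ≤ r} ⊆ Metric.closedBall (-u / v) (r / |v|) := by
  intro e he
  have hfactor : (e - -u / v) * v = u + e * v := by
    rw [sub_mul, div_mul_cancel₀ _ hv]
    ring
  rw [Metric.mem_closedBall, Real.dist_eq, le_div_iff₀ (abs_pos.2 hv), ← abs_mul, hfactor]
  exact he

lemma abs_le_mul_abs_add_mul {R u v e : ℝ} (huv : (R + 1) * |v| ≤ |u|) (he : |e| ≤ R) :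
    |u| ≤ (R + 1) * |u + e * v| := by
  have hev : |e * v| ≤ R * |v| := by
    rw [abs_mul]
    gcongr
  have htri : |u| ≤ |u + e * v| + |e * v| := by
    simpa only [add_sub_cancel_right] using abs_sub (u + e * v) (e * v)
  have hR : 0 ≤ R := (abs_nonneg e).trans he
  nlinarith

lemma volume_setOf_abs_add_mul_le {R u v r : ℝ} (hR : 0 ≤ R) (hr : 0 < r)
    (huv : 0 < max |u| |v|) :
    volume ({e : ℝ | |u + e * v| ≤ r} ∩ Metric.closedBall 0 R) ≤
      ENNReal.ofReal ((R + 1) ^ 2 * (2 * r) / max |u| |v|) := by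
  obtain huv' | huv' := le_or_gt |u| ((R + 1) * |v|)
  · have hv : 0 < |v| := by
      by_contra! h
      exact huv.not_ge (max_le (huv'.trans (mul_nonpos_of_nonneg_of_nonpos (by linarith) h)) h)
    have hmax : max |u| |v| ≤ (R + 1) * |v| := max_le huv' (by nlinarith)
    refine (measure_mono (inter_subset_left.trans
      (setOf_abs_add_mul_le_subset_closedBall (abs_pos.1 hv)))).trans ?_
    rw [Real.volume_closedBall]
    refine ENNReal.ofReal_le_ofReal ?_
    calc 2 * (r / |v|) = (R + 1) * (2 * r) / ((R + 1) * |v|) := by field_simp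
      _ ≤ (R + 1) ^ 2 * (2 * r) / max |u| |v| := by
        gcongr
        nlinarith
  · have hmax : max |u| |v| = |u| := max_eq_left (by nlinarith [abs_nonneg v])
    obtain hempty | ⟨e, her, heR⟩ :=
        ({e : ℝ | |u + e * v| ≤ r} ∩ Metric.closedBall 0 R).eq_empty_or_nonempty
    · simp only [hempty, measure_empty, zero_le]
    have hu : |u| ≤ (R + 1) * r :=
      (abs_le_mul_abs_add_mul huv'.le (mem_closedBall_zero_iff.1 heR)).trans
        (mul_le_mul_of_nonneg_left her (by linarith))
    refine (measure_mono inter_subset_right).trans ?_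
    rw [Real.volume_closedBall, hmax]
    rw [hmax] at huv
    refine ENNReal.ofReal_le_ofReal ((le_div_iff₀ huv).2 ?_)
    nlinarith

theorem ae_map_add_mul_absolutelyContinuous {σ : Measure (ℝ × ℝ)} [IsFiniteMeasure σ]
    (hσ : rieszEnergy 1 σ < ∞) : ∀ᵐ e : ℝ, σ.map (fun p ↦ p.1 + e * p.2) ≪ volume := by
  have hmeas : Measurable (Function.uncurry fun (e : ℝ) (p : ℝ × ℝ) ↦ p.1 + e * p.2) := by
    unfold Function.uncurry
    fun_prop
  suffices h : ∀ R : ℕ, ∀ᵐ e ∂volume.restrict (Metric.closedBall (0 : ℝ) R),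
      σ.map (fun p ↦ p.1 + e * p.2) ≪ volume by
    simpa only [Metric.iUnion_closedBall_nat, Measure.restrict_univ] using
      (ae_restrict_iUnion_iff _ _).2 h
  intro R
  refine ae_map_absolutelyContinuous_of_rieszEnergy_lt_top hmeas volume
    (C := ENNReal.ofReal ((R + 1) ^ 2)) ENNReal.ofReal_ne_top (fun p q r hr ↦ ?_) hσ
  rw [Real.volume_closedBall, ENNReal.rpow_neg_one, Measure.restrict_apply'
    Metric.isClosed_closedBall.measurableSet, ← ENNReal.ofReal_mul (by positivity)]
  obtain hpq | hpq := eq_or_ne p q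
  · rw [hpq, edist_self, ENNReal.inv_zero,
      ENNReal.mul_top (ENNReal.ofReal_pos.2 (by positivity)).ne']
    exact le_top
  have hdist : dist p q = max |(q - p).1| |(q - p).2| := by
    rw [dist_comm, dist_eq_norm]
    rfl
  have hset : {e : ℝ | dist (q.1 + e * q.2) (p.1 + e * p.2) ≤ r} =
      {e | |(q - p).1 + e * (q - p).2| ≤ r} := by
    ext e
    simp only [Real.dist_eq, mem_ofPred_eq, Prod.fst_sub, Prod.snd_sub]
    ring_nf
  rw [edist_dist, ← ENNReal.ofReal_inv_of_pos (dist_pos.2 hpq),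
    ← ENNReal.ofReal_mul (by positivity), ← div_eq_mul_inv, hset, hdist]
  exact volume_setOf_abs_add_mul_le R.cast_nonneg hr (hdist ▸ dist_pos.2 hpq)

end Plane

lemma exists_pos_lt_dimH_one_lt_add {A B : Set ℝ} (hdim : 1 < dimH A + dimH B) :
    ∃ s t : ℝ≥0, 0 < s ∧ 0 < t ∧ s < dimH A ∧ t < dimH B ∧ 1 < s + t := by
  have hle (S : Set ℝ) : dimH S ≤ 1 := (dimH_mono (subset_univ S)).trans_eq Real.dimH_univ
  obtain ⟨s, hs, t, ht, hst⟩ := ENNReal.exists_lt_add_of_lt_add hdim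
    (fun h ↦ hdim.not_ge (by simpa only [h, zero_add] using hle B))
    (fun h ↦ hdim.not_ge (by simpa only [h, add_zero] using hle A))
  lift s to ℝ≥0 using hs.ne_top
  lift t to ℝ≥0 using ht.ne_top
  have hs₁ : s < 1 := mod_cast hs.trans_le (hle A)
  have ht₁ : t < 1 := mod_cast ht.trans_le (hle B)
  have hst₁ : 1 < s + t := mod_cast hst
  exact ⟨s, t, pos_of_lt_add_left (ht₁.trans hst₁), pos_of_lt_add_right (hs₁.trans hst₁), hs, ht,
    hst₁⟩

lemma exists_isFiniteMeasure_prod_rieszEnergy_one_lt_top {A B : Set ℝ} (hA : AnalyticSet A)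
    (hB : AnalyticSet B) (hdim : 1 < dimH A + dimH B) :
    ∃ σ : Measure (ℝ × ℝ), IsFiniteMeasure σ ∧ σ ≠ 0 ∧ σ (A ×ˢ B)ᶜ = 0 ∧
      rieszEnergy 1 σ < ∞ := by
  obtain ⟨s, t, hs, ht, hsA, htB, hst⟩ := exists_pos_lt_dimH_one_lt_add hdim
  obtain ⟨μ, _, hμ₀, hμA, hμ⟩ := exists_isFrostman_of_lt_dimH hA hs hsA
  obtain ⟨ν, _, hν₀, hνB, hν⟩ := exists_isFrostman_of_lt_dimH hB ht htB
  have hsupp : ∀ᵐ p ∂μ.prod ν, p.1 ∈ A ∧ p.2 ∈ B :=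
    (Measure.quasiMeasurePreserving_fst.ae hμA).and (Measure.quasiMeasurePreserving_snd.ae hνB)
  have hprod : μ.prod ν ≠ 0 := by
    rw [Ne, ← Measure.measure_univ_eq_zero, ← univ_prod_univ, Measure.prod_prod]
    exact mul_ne_zero (mt Measure.measure_univ_eq_zero.1 hμ₀)
      (mt Measure.measure_univ_eq_zero.1 hν₀)
  exact ⟨μ.prod ν, inferInstance, hprod, hsupp,
    (hμ.prod hν).rieszEnergy_lt_top zero_le_one (mod_cast hst)⟩

lemma measure_image_ne_zero_of_map_absolutelyContinuous {X Y : Type*} [MeasurableSpace X]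
    [MeasurableSpace Y] {σ : Measure X} (hσ : σ ≠ 0) {S : Set X} (hS : σ Sᶜ = 0) {f : X → Y}
    (hf : AEMeasurable f σ) {m : Measure Y} (hfm : σ.map f ≪ m) : m (f '' S) ≠ 0 := by
  intro hnull
  have hpre : σ (f ⁻¹' (f '' S)) = 0 :=
    le_antisymm ((Measure.le_map_apply hf _).trans_eq (hfm hnull)) zero_le
  refine hσ (Measure.measure_univ_eq_zero.1 (measure_mono_null ?_ (measure_union_null hpre hS)))
  rw [← union_compl_self S]
  exact union_subset_union_left _ (subset_preimage_image f S)

end Marstrand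

theorem stmt19_general (A B : Set ℝ) (hA : AnalyticSet A) (hB : AnalyticSet B)
    (hdim : 1 < dimH A + dimH B) :
    ∀ᵐ e : ℝ, 0 < volume (Set.image2 (fun a b : ℝ => a + e * b) A B) := by
  obtain ⟨σ, _, hσ₀, hσAB, hσ⟩ :=
    Marstrand.exists_isFiniteMeasure_prod_rieszEnergy_one_lt_top hA hB hdim
  filter_upwards [Marstrand.ae_map_add_mul_absolutelyContinuous hσ] with e he
  rw [← Set.image_prod, pos_iff_ne_zero]
  exact Marstrand.measure_image_ne_zero_of_map_absolutelyContinuous hσ₀ hσAB (by fun_prop) he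

theorem stmt19 (E : Set ℝ) (hE : MeasurableSet E) (hsub : E ⊆ Set.Ico (0 : ℝ) 1)
    (hdim : dimH E = 1) :
    ∃ e ∈ Set.Icc (0 : ℝ) 1, 0 < volume (Set.image2 (fun a b : ℝ => a + e * b) E E) :=
  Measure.exists_mem_of_measure_ne_zero_of_ae (by simp)
    (ae_restrict_of_ae (stmt19_general E E hE.analyticSet hE.analyticSet (by norm_num [hdim])))
end
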